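/- arXiv:2212.14826 — 2 statements merged into one kernel-verified Lean document; each statement's English description precedes it below -/
import Mathlib

section
/- Let (u,v) be an axisymmetric (φ-independent) harmonic map from B₁∖Γ to the hyperbolic plane, and suppose there are constants a > 0, b ∈ (−1,1), α ∈ (1/2,1), β > 0 and C > 0 such that for all integers l,k ≥ 0 with l+k ≤ 1 and all 0 < r < 1/2: max_{S²}( |(r∂_r)^l ∇_{g₀}^k (u(r,·) − u_{a,b})| + e^{(3+α−k)u_{a,b}} |(r∂_r)^l ∇_{g₀}^k (v(r,·) − v_{a,b})| ) ≤ C r^β. Let 𝛂 be a C¹ function of (ρ,z) on {(ρ,z) : 0 < r < 1/2, ρ > 0} satisfying the quadrature system ∂_ρ𝛂 = 2∂_ρu + ρ⁻¹ + ρ( (∂_ρu)² − (∂_zu)² + e^{4u}((∂_ρv)² − (∂_zv)²) ) and ∂_z𝛂 = 2∂_zu + 2ρ( ∂_ρu ∂_zu + e^{4u} ∂_ρv ∂_zv ). Then there exist constants 𝛂₀, C' > 0 and β' > 0 such that |𝛂(r,θ) − ln(1 + cos²θ + 2b·cosθ) − 𝛂₀| ≤ C' r^{β'} for all 0 < r <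 1/2 and θ ∈ (0,π). In particular, if 𝛂 extends continuously to the punctured axis with constant value 𝐛₊ on Γ₊∩B_{1/2} and constant value 𝐛₋ on Γ₋∩B_{1/2}, then 𝐛₊ − 𝐛₋ = ln( (1+b)/(1−b) ). -/
open Real MeasureTheory Set Filter

noncomputable section

/-- `θ`-partial derivative of a function of `(θ, φ)`. -/
def pdθ (f : ℝ → ℝ → ℝ) : ℝ → ℝ → ℝ := fun θ φ => deriv (fun x => f x φ) θ

/-- `φ`-partial derivative of a function of `(θ, φ)`. -/
def pdφ (f : ℝ → ℝ → ℝ) : ℝ → ℝ → ℝ := fun θ φ => deriv (fun x => f θ x) φ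

/-- coordinate derivative in direction `i` (`0 = θ`, `1 = φ`). -/
def pder2 (i : Fin 2) : (ℝ → ℝ → ℝ) → (ℝ → ℝ → ℝ) := if i = 0 then pdθ else pdφ

/-- Christoffel symbols `Γ^m_{i j}` of the round metric on `S²` in `(θ, φ)`. -/
def christoffel (m i j : Fin 2) (θ : ℝ) : ℝ :=
  if m = 0 ∧ i = 1 ∧ j = 1 then -(Real.sin θ * Real.cos θ)
  else if m = 1 ∧ ((i = 0 ∧ j = 1) ∨ (i = 1 ∧ j = 0)) then Real.cos θ / Real.sin θ
  else 0

/-- covariant derivative (in the round metric) of a `k`-tensor on `S²`,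
given by its coordinate components. -/
def covDer {k : ℕ} (T : (Fin k → Fin 2) → ℝ → ℝ → ℝ) :
    (Fin (k + 1) → Fin 2) → ℝ → ℝ → ℝ := fun I θ φ =>
  pder2 (I 0) (T fun j => I j.succ) θ φ
    - ∑ j : Fin k, ∑ m : Fin 2,
        christoffel m (I 0) (I j.succ) θ *
          T (Function.update (fun j' => I j'.succ) j m) θ φ

/-- the `k`-th covariant derivative of a function on `S²`. -/
def covIter (f : ℝ → ℝ → ℝ) : (k : ℕ) → (Fin k → Fin 2) → ℝ → ℝ → ℝ
  | 0 => fun _ => f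
  | k + 1 => covDer (covIter f k)

/-- inverse-metric weight used to compute tensor norms. -/
def sphWeight (i : Fin 2) (θ : ℝ) : ℝ := if i = 0 then 1 else (Real.sin θ ^ 2)⁻¹

/-- `|∇_{g₀}^k f|`, the norm of the `k`-th covariant derivative in the round metric. -/
def covNorm (k : ℕ) (f : ℝ → ℝ → ℝ) (θ φ : ℝ) : ℝ :=
  Real.sqrt (∑ I : Fin k → Fin 2, (∏ j, sphWeight (I j) θ) * (covIter f k I θ φ) ^ 2)

/-- `∇_{g₀}f·∇_{g₀}h` on the round sphere. -/
def gradDotS2 (f g : ℝ → ℝ → ℝ) (θ φ : ℝ) : ℝ :=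
  pdθ f θ φ * pdθ g θ φ + (Real.sin θ ^ 2)⁻¹ * pdφ f θ φ * pdφ g θ φ

/-- `|∇_{g₀}f|²` on the round sphere. -/
def gradNormSqS2 (f : ℝ → ℝ → ℝ) (θ φ : ℝ) : ℝ := gradDotS2 f f θ φ

/-- `Δ_{g₀}f`, the round Laplacian in coordinates. -/
def lapS2 (f : ℝ → ℝ → ℝ) (θ φ : ℝ) : ℝ :=
  pdθ (pdθ f) θ φ + (Real.cos θ / Real.sin θ) * pdθ f θ φ +
    (Real.sin θ ^ 2)⁻¹ * pdφ (pdφ f) θ φ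

/-- integral over `S²` with respect to `dvol_{g₀} = sinθ dθ dφ`. -/
def sphInt (f : ℝ → ℝ → ℝ) : ℝ :=
  ∫ θ in Ioo (0 : ℝ) π, (∫ φ in Ioo (0 : ℝ) (2 * π), f θ φ) * Real.sin θ

/-- round distance between the points with coordinates `(θ, φ)` and `(θ', φ')`. -/
def sDist (θ φ θ' φ' : ℝ) : ℝ :=
  Real.arccos (Real.cos θ * Real.cos θ' + Real.sin θ * Real.sin θ' * Real.cos (φ - φ'))

/-- a function on `S²` (in coordinates), of class `C^k`, with bounded covariant
derivatives up to order `k`. -/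
def CkSphere (k : ℕ) (f : ℝ → ℝ → ℝ) : Prop :=
  ContDiffOn ℝ k (fun p : ℝ × ℝ => f p.1 p.2) (Ioo 0 π ×ˢ (univ : Set ℝ)) ∧
  (∀ θ φ : ℝ, f θ (φ + 2 * π) = f θ φ) ∧
  ∃ C : ℝ, ∀ j ≤ k, ∀ θ ∈ Ioo (0 : ℝ) π, ∀ φ : ℝ, covNorm j f θ φ ≤ C

/-- a smooth function on `S²` (in coordinates), with bounded covariant derivatives
of all orders. -/
def SmoothSphere (f : ℝ → ℝ → ℝ) : Prop :=
  ContDiffOn ℝ (⊤ : ℕ∞) (fun p : ℝ × ℝ => f p.1 p.2) (Ioo 0 π ×ˢ (univ : Set ℝ)) ∧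
  (∀ θ φ : ℝ, f θ (φ + 2 * π) = f θ φ) ∧
  ∀ j : ℕ, ∃ C : ℝ, ∀ θ ∈ Ioo (0 : ℝ) π, ∀ φ : ℝ, covNorm j f θ φ ≤ C
/-- Euclidean 3-space. -/
abbrev E3 := EuclideanSpace ℝ (Fin 3)

/-- the `i`-th standard basis vector. -/
def e3 (i : Fin 3) : E3 := EuclideanSpace.single i 1

/-- partial derivative in the `i`-th coordinate direction. -/
def pd3 (i : Fin 3) (f : E3 → ℝ) (x : E3) : ℝ := fderiv ℝ f x (e3 i)

/-- the Euclidean Laplacian `Δf`. -/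
def lap3 (f : E3 → ℝ) (x : E3) : ℝ := ∑ i : Fin 3, pd3 i (fun y => pd3 i f y) x

/-- the Euclidean inner product of gradients, `∇f·∇g`. -/
def dot3 (f g : E3 → ℝ) (x : E3) : ℝ := ∑ i : Fin 3, pd3 i f x * pd3 i g x

/-- the `z`-axis `Γ ⊆ ℝ³`. -/
def axisΓ : Set E3 := {x : E3 | x 0 = 0 ∧ x 1 = 0}

/-- the open unit ball `B₁ ⊆ ℝ³`. -/
def B1 : Set E3 := Metric.ball (0 : E3) 1

/-- the cylindrical radius `ρ = √(x₀² + x₁²)`. -/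
def ρc (x : E3) : ℝ := Real.sqrt ((x 0) ^ 2 + (x 1) ^ 2)

/-- the point with spherical coordinates `(r, θ, φ)`. -/
def sph (r θ φ : ℝ) : E3 :=
  (EuclideanSpace.equiv (Fin 3) ℝ).symm
    ![r * Real.sin θ * Real.cos φ, r * Real.sin θ * Real.sin φ, r * Real.cos θ]

/-- the point with cylindrical coordinates `(ρ, 0, z)`. -/
def cylPt (ρ z : ℝ) : E3 := (EuclideanSpace.equiv (Fin 3) ℝ).symm ![ρ, 0, z]

/-- the radial operator `r∂_r` on functions of spherical coordinates. -/
def Dr (F : ℝ → ℝ → ℝ → ℝ) : ℝ → ℝ → ℝ → ℝ :=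
  fun r θ φ => r * deriv (fun s => F s θ φ) r

/-- `ρ`-partial derivative of a function of `(ρ, z)`. -/
def dρ (f : ℝ → ℝ → ℝ) (ρ z : ℝ) : ℝ := deriv (fun s => f s z) ρ

/-- `z`-partial derivative of a function of `(ρ, z)`. -/
def dz (f : ℝ → ℝ → ℝ) (ρ z : ℝ) : ℝ := deriv (fun s => f ρ s) z

/-- a harmonic map `(u,v) : Ω → ℍ²` (horospherical coordinates, curvature `−2`). -/
def HarmonicPair (u v : E3 → ℝ) (Ω : Set E3) : Prop :=
  ContDiffOn ℝ 3 u Ω ∧ ContDiffOn ℝ 3 v Ω ∧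
  ∀ x ∈ Ω, lap3 u x = 2 * Real.exp (4 * u x) * dot3 v v x ∧
    lap3 v x = -4 * dot3 u v x

/-- `f` is `C^{3,α}` on `s`: it is `C³` there and its third derivatives are
`α`-Hölder on compact subsets. -/
def C3HolderOn (α : ℝ) (f : E3 → ℝ) (s : Set E3) : Prop :=
  ContDiffOn ℝ 3 f s ∧
  ∀ K : Set E3, K ⊆ s → IsCompact K →
    ∃ C : NNReal, HolderOnWith C α.toNNReal (iteratedFDerivWithin ℝ 3 f s) K

/-- `(f, plus its singular part) ∈ C^{3,α}(S²)` in coordinates: `C³` with bounded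
covariant derivatives, `2π`-periodic in `φ`, and third covariant derivative
`α`-Hölder (componentwise) with respect to the round distance. -/
def SphHolder3 (α : ℝ) (f : ℝ → ℝ → ℝ) : Prop :=
  ContDiffOn ℝ 3 (fun p : ℝ × ℝ => f p.1 p.2) (Ioo 0 π ×ˢ (univ : Set ℝ)) ∧
  (∀ θ φ : ℝ, f θ (φ + 2 * π) = f θ φ) ∧
  ∃ C : ℝ, (∀ k ≤ 3, ∀ θ ∈ Ioo (0 : ℝ) π, ∀ φ : ℝ, covNorm k f θ φ ≤ C) ∧
    ∀ I : Fin 3 → Fin 2, ∀ θ ∈ Ioo (0 : ℝ) π, ∀ θ' ∈ Ioo (0 : ℝ) π, ∀ φ φ' : ℝ,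
      |covIter f 3 I θ φ - covIter f 3 I θ' φ'| ≤ C * sDist θ φ θ' φ' ^ α

/-- the extreme-Kerr-type geodesic `u_{a,b}`. -/
def uab (a b θ : ℝ) : ℝ :=
  -Real.log (Real.sin θ) -
    (1 / 2) * Real.log (2 * a * Real.sqrt (1 - b ^ 2) /
      (1 + Real.cos θ ^ 2 + 2 * b * Real.cos θ))

/-- the extreme-Kerr-type geodesic `v_{a,b}`. -/
def vab (a b θ : ℝ) : ℝ :=
  a * (b + b * Real.cos θ ^ 2 + 2 * Real.cos θ) /
    (1 + Real.cos θ ^ 2 + 2 * b * Real.cos θ)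

/-!
Write the gradient in logarithmic polar coordinates as the complex number `∇F = r ∂_r F + i ∂_θ F`.
The quadrature system becomes the single equation
`∇𝛂 = 2 ∇u + (1 + i cot θ) + sin θ (sin θ - i cos θ) ((∇u)² + (e^{2u} ∇v)²)`.
The geodesic `(u_{a,b}, v_{a,b})` has unit speed, `sin² θ (u'² + e^{4u} v'²) = 1`, so putting it in
place of `(u, v)` turns the right-hand side into exactly `i ∂_θ ln (1 + cos² θ + 2b cos θ)`. As
`u_{a,b}` is bounded below, the tangent map condition makes `∇u` and `e^{2u} ∇v` both `O(r^β)`-close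
to their values along the geodesic; these stay bounded after multiplication by `sin θ`, which
controls the squares. Hence the gradient of `𝛂 - ln (1 + cos² θ + 2b cos θ)` is
`O(r^β)`. Integrating along the ray `θ = π / 2` down to the origin and then along the arcs of
constant `r` gives the expansion, whose limits at `θ = 0` and `θ = π` are the two axis values.
-/

open Asymptotics Topology

section Asymptotics

variable {X : Type*} {l : Filter X}

lemma isBigO_mul_of_isBigO_one {𝕜 : Type*} [NormedRing 𝕜] {f h : X → 𝕜} {g : X → ℝ}
    (hf : f =O[l] g) (hh : h =O[l] (fun _ => (1 : ℝ))) : (fun x => f x * h x) =O[l] g := by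
  simpa only [mul_one] using hf.mul hh

lemma isBigO_exp_sub_one {f g : X → ℝ} (hf : f =O[l] g) (hg : g =O[l] (fun _ => (1 : ℝ))) :
    (fun x => Real.exp (f x) - 1) =O[l] g := by
  have hexp : (fun x => Real.exp |f x|) =O[l] (fun _ => (1 : ℝ)) :=
    Real.isBigO_exp_comp_one.2 ((isBigO_one_iff ℝ).1 (hf.trans hg))
  refine (IsBigO.of_norm_le fun x => ?_).trans (isBigO_mul_of_isBigO_one hf.abs_left hexp)
  have h := Complex.norm_exp_sub_sum_le_norm_mul_exp (f x) 1
  simp only [Finset.sum_range_one, pow_zero, Nat.factorial_zero, Nat.cast_one, div_one, pow_one,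
    Complex.norm_real, Real.norm_eq_abs] at h
  rw [← Complex.norm_real]
  exact_mod_cast h

lemma isBigO_mul_sq_sub_sq {𝕜 : Type*} [NormedField 𝕜] {s w w₀ : X → 𝕜} {g : X → ℝ}
    (hg : g =O[l] (fun _ => (1 : ℝ))) (hs : s =O[l] (fun _ => (1 : ℝ)))
    (hsw₀ : (fun x => s x * w₀ x) =O[l] (fun _ => (1 : ℝ)))
    (hw : (fun x => w x - w₀ x) =O[l] g) :
    (fun x => s x * (w x ^ 2 - w₀ x ^ 2)) =O[l] g := by
  have hsum : (fun x => s x * (w x - w₀ x) + 2 * (s x * w₀ x)) =O[l] (fun _ => (1 : ℝ)) :=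
    (isBigO_mul_of_isBigO_one (hw.trans hg) hs |>.congr_left fun x => mul_comm _ _).add
      (hsw₀.const_mul_left 2)
  refine (isBigO_mul_of_isBigO_one hw hsum).congr_left fun x => ?_
  ring

end Asymptotics

section Integration

variable {E : Type*} [NormedAddCommGroup E]

lemma exists_norm_sub_le_of_oscillation_le [CompleteSpace E] {f : ℝ → E} {e : ℝ → ℝ} {R : ℝ}
    (he : Tendsto e (𝓝[>] 0) (𝓝 0)) (hosc : ∀ r ∈ Ioo 0 R, ∀ t ∈ Ioc 0 r, ‖f r - f t‖ ≤ e r) :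
    ∃ L : E, ∀ r ∈ Ioo 0 R, ‖f r - L‖ ≤ e r := by
  rcases le_or_gt R 0 with hR | hR
  · exact ⟨0, fun r hr => absurd (hr.1.trans hr.2) hR.not_gt⟩
  have hcauchy : Cauchy (map f (𝓝[>] 0)) := by
    refine Metric.cauchy_iff.2 ⟨inferInstance, fun ε hε => ?_⟩
    obtain ⟨r, hre, hr⟩ := ((he.eventually_lt_const (half_pos hε)).and (Ioo_mem_nhdsGT hR)).exists
    refine ⟨f '' Ioc 0 r, image_mem_map (Ioc_mem_nhdsGT hr.1), ?_⟩
    rintro _ ⟨s, hs, rfl⟩ _ ⟨t, ht, rfl⟩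
    have hs := hosc r hr s hs
    have ht := hosc r hr t ht
    rw [← dist_eq_norm] at hs ht
    linarith [dist_triangle_left (f s) (f t) (f r)]
  obtain ⟨L, hL⟩ := cauchy_map_iff_exists_tendsto.1 hcauchy
  refine ⟨L, fun r hr => le_of_tendsto (hL.const_sub (f r)).norm ?_⟩
  filter_upwards [Ioc_mem_nhdsGT hr.1] with t ht using hosc r hr t ht

variable [NormedSpace ℝ E]

lemma norm_sub_le_of_norm_smul_deriv_le_rpow {f f' : ℝ → E} {K β r t : ℝ} (hβ : β ≠ 0)
    (ht : 0 < t) (htr : t ≤ r) (hf : ∀ x ∈ Icc t r, HasDerivAt f (f' x) x)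
    (hbound : ∀ x ∈ Icc t r, ‖x • f' x‖ ≤ K * x ^ β) :
    ‖f r - f t‖ ≤ K / β * (r ^ β - t ^ β) := by
  have hpow : ∀ x ∈ Icc t r,
      HasDerivAt (fun x : ℝ => K / β * (x ^ β - t ^ β)) (K * x ^ β / x) x := by
    intro x hx
    have hx0 := (ht.trans_le hx.1).ne'
    refine (((Real.hasDerivAt_rpow_const (Or.inl hx0)).sub_const _).const_mul
      (K / β)).congr_deriv ?_
    rw [Real.rpow_sub_one hx0]
    field_simp
  refine image_norm_le_of_norm_deriv_right_le_deriv_boundary'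
    (f := fun x => f x - f t) (f' := f') (B := fun x => K / β * (x ^ β - t ^ β))
    (B' := fun x => K * x ^ β / x)
    ?_ ?_ (by simp) ?_ ?_ ?_ ⟨htr, le_rfl⟩
  · exact fun x hx => ((hf x hx).sub_const _).continuousAt.continuousWithinAt
  · exact fun x hx => ((hf x (Ico_subset_Icc_self hx)).sub_const _).hasDerivWithinAt
  · exact fun x hx => (hpow x hx).continuousAt.continuousWithinAt
  · exact fun x hx => (hpow x (Ico_subset_Icc_self hx)).hasDerivWithinAt
  · intro x hx
    have hx0 := ht.trans_le hx.1
    have h := hbound x (Ico_subset_Icc_self hx)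
    rwa [norm_smul, Real.norm_of_nonneg hx0.le, mul_comm, ← le_div_iff₀ hx0] at h

lemma exists_norm_sub_le_rpow [CompleteSpace E] {f f' : ℝ → E} {K β R : ℝ} (hK : 0 ≤ K)
    (hβ : 0 < β) (hf : ∀ r ∈ Ioo 0 R, HasDerivAt f (f' r) r)
    (hbound : ∀ r ∈ Ioo 0 R, ‖r • f' r‖ ≤ K * r ^ β) :
    ∃ L : E, ∀ r ∈ Ioo 0 R, ‖f r - L‖ ≤ K / β * r ^ β := by
  refine exists_norm_sub_le_of_oscillation_le ?_ fun r hr t ht => ?_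
  · have h := (Real.continuousAt_rpow_const 0 β (Or.inr hβ.le)).tendsto.const_mul (K / β)
    rw [Real.zero_rpow hβ.ne', mul_zero] at h
    exact h.mono_left nhdsWithin_le_nhds
  · have hmem : ∀ x ∈ Icc t r, x ∈ Ioo 0 R := fun x hx =>
      ⟨ht.1.trans_le hx.1, hx.2.trans_lt hr.2⟩
    refine (norm_sub_le_of_norm_smul_deriv_le_rpow hβ.ne' ht.1 ht.2
      (fun x hx => hf x (hmem x hx)) fun x hx => hbound x (hmem x hx)).trans ?_
    have := Real.rpow_nonneg ht.1.le β
    gcongr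
    linarith

lemma exists_isBigO_sub_const_of_polar_deriv [CompleteSpace E] {F Fr Fθ : ℝ × ℝ → E}
    {β R θ₀ : ℝ} {Θ : Set ℝ} (hβ : 0 < β) (hΘ : Convex ℝ Θ) (hΘb : Bornology.IsBounded Θ)
    (hθ₀ : θ₀ ∈ Θ)
    (hr : ∀ t ∈ Ioo 0 R ×ˢ Θ, HasDerivAt (fun r => F (r, t.2)) (Fr t) t.1)
    (hθ : ∀ t ∈ Ioo 0 R ×ˢ Θ, HasDerivAt (fun θ => F (t.1, θ)) (Fθ t) t.2)
    (hFr : (fun t => t.1 • Fr t) =O[𝓟 (Ioo 0 R ×ˢ Θ)] fun t => t.1 ^ β)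
    (hFθ : Fθ =O[𝓟 (Ioo 0 R ×ˢ Θ)] fun t => t.1 ^ β) :
    ∃ L : E, (fun t => F t - L) =O[𝓟 (Ioo 0 R ×ˢ Θ)] fun t => t.1 ^ β := by
  obtain ⟨K₁, hK₁, hFr⟩ := hFr.exists_nonneg
  obtain ⟨K₂, hK₂, hFθ⟩ := hFθ.exists_nonneg
  rw [isBigOWith_principal] at hFr hFθ
  have hnorm : ∀ r ∈ Ioo 0 R, ‖r ^ β‖ = r ^ β := fun r hr =>
    Real.norm_of_nonneg (Real.rpow_nonneg hr.1.le β)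
  obtain ⟨L, hL⟩ := exists_norm_sub_le_rpow (f := fun r => F (r, θ₀))
    (f' := fun r => Fr (r, θ₀)) hK₁ hβ (fun r hr' => hr (r, θ₀) ⟨hr', hθ₀⟩)
    fun r hr' => (hFr (r, θ₀) ⟨hr', hθ₀⟩).trans_eq (by rw [hnorm r hr'])
  refine ⟨L, isBigO_principal.2 ⟨K₂ * Metric.diam Θ + K₁ / β, fun ⟨r, θ⟩ ⟨hr', hθ'⟩ => ?_⟩⟩
  have hang : ‖F (r, θ) - F (r, θ₀)‖ ≤ K₂ * r ^ β * Metric.diam Θ := by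
    refine (hΘ.norm_image_sub_le_of_norm_hasDerivWithin_le
      (f := fun x => F (r, x))
      (f' := fun x => Fθ (r, x)) (C := K₂ * ‖r ^ β‖)
      (fun x hx => (hθ (r, x) ⟨hr', hx⟩).hasDerivWithinAt)
      (fun x hx => hFθ (r, x) ⟨hr', hx⟩) hθ₀ hθ').trans ?_
    rw [hnorm r hr', ← dist_eq_norm]
    gcongr
    · exact mul_nonneg hK₂ (Real.rpow_nonneg hr'.1.le β)
    · exact Metric.dist_le_diam_of_mem hΘb hθ' hθ₀
  rw [hnorm r hr']
  linarith [norm_sub_le_norm_sub_add_norm_sub (F (r, θ)) (F (r, θ₀)) L, hL r hr']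

end Integration

section PolarCoordinates

/-- The point `(ρ, z) = (r sin θ, r cos θ)` of the meridian half-plane with polar coordinates
`t = (r, θ)`; the angle is measured from the positive `z`-axis. -/
def polarPt (t : ℝ × ℝ) : ℝ × ℝ := (t.1 * sin t.2, t.1 * cos t.2)

/-- A function of `(ρ, z)` written in the polar coordinates `t = (r, θ)`. -/
def polar (F : ℝ → ℝ → ℝ) (t : ℝ × ℝ) : ℝ := F (t.1 * sin t.2) (t.1 * cos t.2)

/-- The gradient of a function of `(ρ, z)` in logarithmic polar coordinates, at `t = (r, θ)`,
encoded as the complex number `r ∂_r F + i ∂_θ F`. -/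
def polarGrad (F : ℝ → ℝ → ℝ) (t : ℝ × ℝ) : ℂ :=
  ⟨t.1 * deriv (fun r => polar F (r, t.2)) t.1, deriv (fun θ => polar F (t.1, θ)) t.2⟩

/-- The gradient of a function of `(ρ, z)` encoded as the complex number `∂_ρ F - i ∂_z F`, for
which the quadrature system becomes a single equation. -/
def conjGrad (F : ℝ → ℝ → ℝ) (p : ℝ × ℝ) : ℂ := dρ F p.1 p.2 - Complex.I * dz F p.1 p.2

/-- The open half-disc of radius `R` in the meridian half-plane `ρ > 0`. -/
def halfDisc (R : ℝ) : Set (ℝ × ℝ) := {p | 0 < p.1 ∧ √(p.1 ^ 2 + p.2 ^ 2) < R}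

/-- The range of the polar coordinates `(r, θ)` on `halfDisc R`. -/
def polarHalfDisc (R : ℝ) : Set (ℝ × ℝ) := Ioo 0 R ×ˢ Ioo 0 π

variable {F : ℝ → ℝ → ℝ} {t : ℝ × ℝ} {R : ℝ}

lemma sin_pos_of_mem_polarHalfDisc (ht : t ∈ polarHalfDisc R) : 0 < sin t.2 :=
  sin_pos_of_mem_Ioo ht.2

lemma sqrt_polarPt_sq_add_sq (ht : 0 ≤ t.1) : √((polarPt t).1 ^ 2 + (polarPt t).2 ^ 2) = t.1 := by
  rw [polarPt, mul_pow, mul_pow, ← mul_add, sin_sq_add_cos_sq, mul_one, sqrt_sq ht]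

lemma polarPt_mem_halfDisc (ht : t ∈ polarHalfDisc R) : polarPt t ∈ halfDisc R :=
  ⟨mul_pos ht.1.1 (sin_pos_of_mem_polarHalfDisc ht),
    (sqrt_polarPt_sq_add_sq ht.1.1.le).trans_lt ht.1.2⟩

lemma exists_polarPt_eq {p : ℝ × ℝ} (hp : p ∈ halfDisc R) :
    ∃ t ∈ polarHalfDisc R, polarPt t = p := by
  let w : ℂ := ⟨p.2, p.1⟩
  have hw : w ≠ 0 := fun h => hp.1.ne' (congrArg Complex.im h)
  have heq : polarPt (‖w‖, w.arg) = p :=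
    Prod.ext (Complex.norm_mul_sin_arg w) (Complex.norm_mul_cos_arg w)
  have hnorm := sqrt_polarPt_sq_add_sq (t := (‖w‖, w.arg)) (norm_nonneg w)
  rw [heq] at hnorm
  refine ⟨(‖w‖, w.arg), ⟨⟨norm_pos_iff.2 hw, hnorm ▸ hp.2⟩, ?_, ?_⟩, heq⟩
  · exact (Complex.arg_nonneg_iff.2 hp.1.le).lt_of_ne' fun h =>
      hp.1.ne' (Complex.arg_eq_zero_iff.1 h).2
  · exact Complex.arg_lt_pi_iff.2 (Or.inr hp.1.ne')

lemma isOpen_halfDisc : IsOpen (halfDisc R) :=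
  (isOpen_lt continuous_const continuous_fst).inter (isOpen_lt
    (f := fun p : ℝ × ℝ => √(p.1 ^ 2 + p.2 ^ 2)) (by fun_prop) continuous_const)

lemma differentiableAt_polarPt
    (hF : DifferentiableOn ℝ (Function.uncurry F) (halfDisc R)) (ht : t ∈ polarHalfDisc R) :
    DifferentiableAt ℝ (Function.uncurry F) (polarPt t) :=
  hF.differentiableAt (isOpen_halfDisc.mem_nhds (polarPt_mem_halfDisc ht))

lemma fderiv_uncurry_apply {p : ℝ × ℝ} (h : DifferentiableAt ℝ (Function.uncurry F) p) (m n : ℝ) :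
    fderiv ℝ (Function.uncurry F) p (m, n) = m * dρ F p.1 p.2 + n * dz F p.1 p.2 := by
  have hρ : HasDerivAt (fun x => F x p.2) (fderiv ℝ (Function.uncurry F) p (1, 0)) p.1 :=
    h.hasFDerivAt.comp_hasDerivAt (f := fun x => (x, p.2)) p.1
      ((hasDerivAt_id p.1).prodMk (hasDerivAt_const p.1 p.2))
  have hz : HasDerivAt (fun x => F p.1 x) (fderiv ℝ (Function.uncurry F) p (0, 1)) p.2 :=
    h.hasFDerivAt.comp_hasDerivAt (f := fun x => (p.1, x)) p.2
      ((hasDerivAt_const p.2 p.1).prodMk (hasDerivAt_id p.2))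
  rw [dρ, dz, hρ.deriv, hz.deriv, ← smul_eq_mul, ← smul_eq_mul, ← map_smul, ← map_smul, ← map_add]
  simp

lemma hasDerivAt_polar_radial (h : DifferentiableAt ℝ (Function.uncurry F) (polarPt t)) :
    HasDerivAt (fun r => polar F (r, t.2))
      (sin t.2 * dρ F (polarPt t).1 (polarPt t).2 + cos t.2 * dz F (polarPt t).1 (polarPt t).2)
      t.1 := by
  rw [← fderiv_uncurry_apply h]
  refine h.hasFDerivAt.comp_hasDerivAt (f := fun r => polarPt (r, t.2)) t.1 ?_
  exact (((hasDerivAt_id t.1).mul_const (sin t.2)).prodMk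
    ((hasDerivAt_id t.1).mul_const (cos t.2))).congr_deriv (by simp only [one_mul])

lemma hasDerivAt_polar_angular (h : DifferentiableAt ℝ (Function.uncurry F) (polarPt t)) :
    HasDerivAt (fun θ => polar F (t.1, θ))
      (t.1 * (cos t.2 * dρ F (polarPt t).1 (polarPt t).2
        - sin t.2 * dz F (polarPt t).1 (polarPt t).2)) t.2 := by
  have h' := h.hasFDerivAt.comp_hasDerivAt (f := fun θ => polarPt (t.1, θ)) t.2
    (((hasDerivAt_sin t.2).const_mul t.1).prodMk ((hasDerivAt_cos t.2).const_mul t.1))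
  rw [fderiv_uncurry_apply h] at h'
  exact h'.congr_deriv (by ring)

lemma polarGrad_eq_mul_conjGrad (h : DifferentiableAt ℝ (Function.uncurry F) (polarPt t)) :
    polarGrad F t = t.1 * (sin t.2 + Complex.I * cos t.2) * conjGrad F (polarPt t) := by
  rw [polarGrad, (hasDerivAt_polar_radial h).deriv, (hasDerivAt_polar_angular h).deriv, conjGrad]
  apply Complex.ext <;> simp [-Complex.ofReal_sin, -Complex.ofReal_cos] <;> ring

end PolarCoordinates

section Quadrature

variable {A U V : ℝ → ℝ → ℝ} {p t : ℝ × ℝ}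

/-- The quadrature system for the metric coefficient `A` of the axisymmetric map `(U, V)`, at the
point `p = (ρ, z)` of the meridian half-plane. -/
structure IsQuadratureAt (A U V : ℝ → ℝ → ℝ) (p : ℝ × ℝ) : Prop where
  dρ_eq : dρ A p.1 p.2 = 2 * dρ U p.1 p.2 + p.1⁻¹
    + p.1 * (dρ U p.1 p.2 ^ 2 - dz U p.1 p.2 ^ 2
      + exp (4 * U p.1 p.2) * (dρ V p.1 p.2 ^ 2 - dz V p.1 p.2 ^ 2))
  dz_eq : dz A p.1 p.2 = 2 * dz U p.1 p.2
    + 2 * p.1 * (dρ U p.1 p.2 * dz U p.1 p.2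
      + exp (4 * U p.1 p.2) * dρ V p.1 p.2 * dz V p.1 p.2)

lemma IsQuadratureAt.conjGrad_eq (h : IsQuadratureAt A U V p) :
    conjGrad A p = 2 * conjGrad U p + (p.1 : ℂ)⁻¹
      + p.1 * (conjGrad U p ^ 2 + (exp (2 * U p.1 p.2) * conjGrad V p) ^ 2) := by
  have hexp : exp (4 * U p.1 p.2) = exp (2 * U p.1 p.2) ^ 2 := by
    rw [← exp_nat_mul]
    ring_nf
  simp only [conjGrad, h.dρ_eq, h.dz_eq, hexp]
  push_cast
  ring_nf
  simp only [Complex.I_sq]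
  ring

lemma IsQuadratureAt.polarGrad_eq (h : IsQuadratureAt A U V (polarPt t)) (ht : (polarPt t).1 ≠ 0)
    (hA : DifferentiableAt ℝ (Function.uncurry A) (polarPt t))
    (hU : DifferentiableAt ℝ (Function.uncurry U) (polarPt t))
    (hV : DifferentiableAt ℝ (Function.uncurry V) (polarPt t)) :
    polarGrad A t = 2 * polarGrad U t + (1 + Complex.I * (cos t.2 / sin t.2))
      + (sin t.2 - Complex.I * cos t.2)
        * (sin t.2 * (polarGrad U t ^ 2 + (exp (2 * polar U t) * polarGrad V t) ^ 2)) := by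
  have hr : (t.1 : ℂ) ≠ 0 := Complex.ofReal_ne_zero.2 (left_ne_zero_of_mul ht)
  have hs : (sin t.2 : ℂ) ≠ 0 := Complex.ofReal_ne_zero.2 (right_ne_zero_of_mul ht)
  have hsc : (sin t.2 : ℂ) ^ 2 + (cos t.2 : ℂ) ^ 2 = 1 := by exact_mod_cast sin_sq_add_cos_sq t.2
  have hinv : t.1 * (sin t.2 + Complex.I * cos t.2) * (t.1 * sin t.2 : ℂ)⁻¹
      = 1 + Complex.I * (cos t.2 / sin t.2) := by
    field_simp
  rw [polarGrad_eq_mul_conjGrad hA, polarGrad_eq_mul_conjGrad hU, polarGrad_eq_mul_conjGrad hV,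
    h.conjGrad_eq,
    show exp (2 * U (polarPt t).1 (polarPt t).2) = exp (2 * polar U t) from rfl,
    show ((polarPt t).1 : ℂ) = t.1 * sin t.2 from Complex.ofReal_mul _ _]
  generalize conjGrad U _ = u, conjGrad V _ = v, exp (2 * polar U t) = m,
    (t.1 : ℂ) = r, (sin t.2 : ℂ) = s, (cos t.2 : ℂ) = c at *
  linear_combination hinv
    + r ^ 2 * s * (u ^ 2 + (m * v) ^ 2) * (s + Complex.I * c) * (c ^ 2 * Complex.I_sq - hsc)

end Quadrature

section KerrGeodesic

variable {a b θ : ℝ}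

/-- The quadratic `1 + x² + 2bx` whose value at `x = cos θ` is the denominator in `u_{a,b}` and
`v_{a,b}`. -/
def kerrDenom (b x : ℝ) : ℝ := 1 + x ^ 2 + 2 * b * x

lemma one_sub_sq_le_kerrDenom (b x : ℝ) : 1 - b ^ 2 ≤ kerrDenom b x := by
  unfold kerrDenom
  nlinarith [sq_nonneg (x + b)]

lemma one_sub_sq_pos (hb : b ∈ Ioo (-1 : ℝ) 1) : 0 < 1 - b ^ 2 := by
  nlinarith [hb.1, hb.2]

lemma kerrDenom_pos (hb : b ∈ Ioo (-1 : ℝ) 1) (x : ℝ) : 0 < kerrDenom b x :=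
  (one_sub_sq_pos hb).trans_le (one_sub_sq_le_kerrDenom b x)

lemma hasDerivAt_kerrDenom_cos (b θ : ℝ) :
    HasDerivAt (fun θ => kerrDenom b (cos θ)) (-2 * sin θ * (cos θ + b)) θ := by
  have hcos := hasDerivAt_cos θ
  exact (((hcos.pow 2).const_add 1).add (hcos.const_mul (2 * b))).congr_deriv (by norm_num; ring)

lemma uab_eq_log (ha : 0 < a) (hb : b ∈ Ioo (-1 : ℝ) 1) (θ : ℝ) :
    uab a b θ = -log (sin θ) + 1 / 2 * log (kerrDenom b (cos θ))
      - 1 / 2 * log (2 * a * √(1 - b ^ 2)) := by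
  have hσ : 0 < √(1 - b ^ 2) := sqrt_pos.2 (one_sub_sq_pos hb)
  rw [uab, ← kerrDenom, log_div (by positivity) (kerrDenom_pos hb _).ne']
  ring

lemma exp_two_mul_uab (ha : 0 < a) (hb : b ∈ Ioo (-1 : ℝ) 1) (hθ : θ ∈ Ioo 0 π) :
    exp (2 * uab a b θ) = kerrDenom b (cos θ) / (sin θ ^ 2 * (2 * a * √(1 - b ^ 2))) := by
  have hs : 0 < sin θ := sin_pos_of_mem_Ioo hθ
  have hσ : 0 < √(1 - b ^ 2) := sqrt_pos.2 (one_sub_sq_pos hb)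
  have hD := kerrDenom_pos hb (cos θ)
  rw [← exp_log (show 0 < kerrDenom b (cos θ) / (sin θ ^ 2 * (2 * a * √(1 - b ^ 2))) by positivity),
    log_div hD.ne' (by positivity), log_mul (by positivity) (by positivity), log_pow,
    uab_eq_log ha hb]
  push_cast
  ring_nf

lemma isBigO_exp_mul_uab (ha : 0 < a) (hb : b ∈ Ioo (-1 : ℝ) 1) {κ κ' : ℝ} (hκ : κ ≤ κ') :
    (fun θ => exp (κ * uab a b θ)) =O[𝓟 (Ioo 0 π)] fun θ => exp (κ' * uab a b θ) := by
  let m := 1 / 2 * log (1 - b ^ 2) - 1 / 2 * log (2 * a * √(1 - b ^ 2))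
  refine isBigO_principal.2 ⟨exp ((κ - κ') * m), fun θ hθ => ?_⟩
  have hm : m ≤ uab a b θ := by
    have hsin := log_nonpos (sin_pos_of_mem_Ioo hθ).le (sin_le_one θ)
    have hdenom := log_le_log (one_sub_sq_pos hb) (one_sub_sq_le_kerrDenom b (cos θ))
    rw [uab_eq_log ha hb]
    simp only [m]
    linarith
  rw [norm_of_nonneg (exp_nonneg _), norm_of_nonneg (exp_nonneg _), ← exp_add, exp_le_exp]
  nlinarith

lemma hasDerivAt_uab (ha : 0 < a) (hb : b ∈ Ioo (-1 : ℝ) 1) (hθ : θ ∈ Ioo 0 π) :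
    HasDerivAt (uab a b) (-(cos θ / sin θ) - sin θ * (cos θ + b) / kerrDenom b (cos θ)) θ := by
  have hlog_sin := (hasDerivAt_sin θ).log (sin_pos_of_mem_Ioo hθ).ne'
  have hlog_denom := (hasDerivAt_kerrDenom_cos b θ).log (kerrDenom_pos hb _).ne'
  rw [funext (uab_eq_log ha hb)]
  exact ((hlog_sin.neg.add (hlog_denom.const_mul (1 / 2))).sub_const _).congr_deriv (by ring)

lemma hasDerivAt_log_kerrDenom_cos (ha : 0 < a) (hb : b ∈ Ioo (-1 : ℝ) 1) (hθ : θ ∈ Ioo 0 π) :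
    HasDerivAt (fun θ => log (kerrDenom b (cos θ)))
      (2 * (deriv (uab a b) θ + cos θ / sin θ)) θ := by
  rw [(hasDerivAt_uab ha hb hθ).deriv]
  exact ((hasDerivAt_kerrDenom_cos b θ).log (kerrDenom_pos hb _).ne').congr_deriv (by ring)

lemma hasDerivAt_vab (hb : b ∈ Ioo (-1 : ℝ) 1) (a θ : ℝ) :
    HasDerivAt (vab a b) (-2 * a * (1 - b ^ 2) * sin θ ^ 3 / kerrDenom b (cos θ) ^ 2) θ := by
  have hcos := hasDerivAt_cos θ
  have hnum := (((hcos.pow 2).const_mul b).const_add b).add (hcos.const_mul 2) |>.const_mul a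
  refine (hnum.div (hasDerivAt_kerrDenom_cos b θ) (kerrDenom_pos hb _).ne').congr_deriv ?_
  congr 1
  simp only [kerrDenom, Pi.add_apply, pow_succ (sin θ) 2, sin_sq]
  norm_num
  ring

lemma exp_two_mul_uab_mul_deriv_vab (ha : 0 < a) (hb : b ∈ Ioo (-1 : ℝ) 1) (hθ : θ ∈ Ioo 0 π) :
    exp (2 * uab a b θ) * deriv (vab a b) θ
      = -(√(1 - b ^ 2) * sin θ / kerrDenom b (cos θ)) := by
  have hs := sin_pos_of_mem_Ioo hθ
  have hσ : 0 < √(1 - b ^ 2) := sqrt_pos.2 (one_sub_sq_pos hb)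
  have hD := kerrDenom_pos hb (cos θ)
  have hσ_sq : √(1 - b ^ 2) ^ 2 = 1 - b ^ 2 := sq_sqrt (one_sub_sq_pos hb).le
  rw [exp_two_mul_uab ha hb hθ, (hasDerivAt_vab hb a θ).deriv]
  field_simp
  rw [hσ_sq]

lemma abs_exp_two_mul_uab_mul_deriv_vab_le (ha : 0 < a) (hb : b ∈ Ioo (-1 : ℝ) 1)
    (hθ : θ ∈ Ioo 0 π) :
    |exp (2 * uab a b θ) * deriv (vab a b) θ| ≤ √(1 - b ^ 2) / (1 - b ^ 2) := by
  have hs := sin_pos_of_mem_Ioo hθ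
  have hD := kerrDenom_pos hb (cos θ)
  rw [exp_two_mul_uab_mul_deriv_vab ha hb hθ, abs_neg, abs_of_nonneg (by positivity)]
  exact div_le_div₀ (sqrt_nonneg _) (mul_le_of_le_one_right (sqrt_nonneg _) (sin_le_one θ))
    (one_sub_sq_pos hb) (one_sub_sq_le_kerrDenom b _)

lemma sin_sq_mul_kerr_speed (ha : 0 < a) (hb : b ∈ Ioo (-1 : ℝ) 1) (hθ : θ ∈ Ioo 0 π) :
    sin θ ^ 2 * (deriv (uab a b) θ ^ 2 + (exp (2 * uab a b θ) * deriv (vab a b) θ) ^ 2) = 1 := by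
  have hs := (sin_pos_of_mem_Ioo hθ).ne'
  have hD := (kerrDenom_pos hb (cos θ)).ne'
  have hσ_sq : √(1 - b ^ 2) ^ 2 = 1 - b ^ 2 := sq_sqrt (one_sub_sq_pos hb).le
  rw [(hasDerivAt_uab ha hb hθ).deriv, exp_two_mul_uab_mul_deriv_vab ha hb hθ]
  field_simp
  have hs_four : sin θ ^ 4 = (1 - cos θ ^ 2) ^ 2 := by rw [← sin_sq, ← pow_mul]
  rw [hσ_sq, hs_four, sin_sq, kerrDenom]
  ring

lemma abs_sin_mul_deriv_uab_le_one (ha : 0 < a) (hb : b ∈ Ioo (-1 : ℝ) 1) (hθ : θ ∈ Ioo 0 π) :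
    |sin θ * deriv (uab a b) θ| ≤ 1 := by
  rw [← sq_le_one_iff_abs_le_one, ← sin_sq_mul_kerr_speed ha hb hθ, mul_pow]
  gcongr
  exact le_add_of_nonneg_right (sq_nonneg _)

lemma kerr_polarGrad_quadrature (ha : 0 < a) (hb : b ∈ Ioo (-1 : ℝ) 1) (hθ : θ ∈ Ioo 0 π) :
    2 * (Complex.I * deriv (uab a b) θ) + (1 + Complex.I * (cos θ / sin θ))
      + (sin θ - Complex.I * cos θ) * (sin θ * ((Complex.I * deriv (uab a b) θ) ^ 2
        + (Complex.I * (exp (2 * uab a b θ) * deriv (vab a b) θ : ℝ)) ^ 2))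
      = Complex.I * (2 * (deriv (uab a b) θ + cos θ / sin θ) : ℝ) := by
  have hs := Complex.ofReal_ne_zero.2 (sin_pos_of_mem_Ioo hθ).ne'
  have hspeed := congrArg Complex.ofReal (sin_sq_mul_kerr_speed ha hb hθ)
  generalize exp (2 * uab a b θ) * deriv (vab a b) θ = Q, deriv (uab a b) θ = q, sin θ = s,
    cos θ = c at *
  push_cast at hspeed ⊢
  have hdiv : (s * (q ^ 2 + Q ^ 2) : ℂ) = 1 / s := by
    rw [eq_div_iff hs]
    linear_combination hspeed
  linear_combination (s - Complex.I * c) * (s * (q ^ 2 + Q ^ 2)) * Complex.I_sq - hspeed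
    + Complex.I * c * hdiv

end KerrGeodesic

section KerrTangent

variable {a b β R : ℝ} {A U V : ℝ → ℝ → ℝ}

lemma isBigO_radius_rpow_one (hβ : 0 ≤ β) (Θ : Set ℝ) :
    (fun t : ℝ × ℝ => t.1 ^ β) =O[𝓟 (Ioo 0 R ×ˢ Θ)] (fun _ => (1 : ℝ)) := by
  refine isBigO_principal.2 ⟨R ^ β, fun t ht => ?_⟩
  rw [norm_of_nonneg (rpow_nonneg ht.1.1.le β), norm_one, mul_one]
  exact rpow_le_rpow ht.1.1.le ht.1.2.le hβ

/-- The map `(U, V)` on the half-disc of radius `R` is asymptotic at the origin to the geodesic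
`(u_{a,b}, v_{a,b})`, with rate `r ^ β` in `C¹`. The derivatives of `V` carry the weight
`e^{2u_{a,b}}` that measures them in the hyperbolic metric. -/
structure HasKerrTangent (a b β R : ℝ) (U V : ℝ → ℝ → ℝ) : Prop where
  isBigO_polar_sub :
    (fun t => polar U t - uab a b t.2) =O[𝓟 (polarHalfDisc R)] fun t => t.1 ^ β
  isBigO_polarGrad_sub : (fun t => polarGrad U t - Complex.I * deriv (uab a b) t.2)
    =O[𝓟 (polarHalfDisc R)] fun t => t.1 ^ β
  isBigO_exp_mul_polarGrad_sub :
    (fun t => (exp (2 * uab a b t.2) : ℂ)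
      * (polarGrad V t - Complex.I * deriv (vab a b) t.2))
    =O[𝓟 (polarHalfDisc R)] fun t => t.1 ^ β

lemma isBigO_exp_two_mul_uab_mul_deriv_vab_one (ha : 0 < a) (hb : b ∈ Ioo (-1 : ℝ) 1) :
    (fun t : ℝ × ℝ => Complex.I * (exp (2 * uab a b t.2) * deriv (vab a b) t.2 : ℝ))
      =O[𝓟 (polarHalfDisc R)] (fun _ => (1 : ℝ)) := by
  refine isBigO_principal.2 ⟨√(1 - b ^ 2) / (1 - b ^ 2), fun t ht => ?_⟩
  rw [norm_mul, Complex.norm_I, one_mul, Complex.norm_real, norm_one, mul_one]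
  exact abs_exp_two_mul_uab_mul_deriv_vab_le ha hb ht.2

lemma isBigO_sin_one (l : Filter (ℝ × ℝ)) :
    (fun t => (sin t.2 : ℂ)) =O[l] (fun _ => (1 : ℝ)) := by
  refine IsBigO.of_norm_le fun t => ?_
  rw [Complex.norm_real]
  exact abs_sin_le_one t.2

lemma isBigO_sin_sub_I_mul_cos_one (l : Filter (ℝ × ℝ)) :
    (fun t => (sin t.2 - Complex.I * cos t.2 : ℂ)) =O[l] (fun _ => (1 : ℝ)) := by
  refine (isBigO_sin_one l).sub (IsBigO.of_norm_le fun t => ?_)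
  rw [norm_mul, Complex.norm_I, one_mul, Complex.norm_real]
  exact abs_cos_le_one t.2

namespace HasKerrTangent

lemma isBigO_exp_polar_mul_polarGrad_sub (hT : HasKerrTangent a b β R U V) (ha : 0 < a)
    (hb : b ∈ Ioo (-1 : ℝ) 1) (hβ : 0 ≤ β) :
    (fun t => exp (2 * polar U t) * polarGrad V t
      - Complex.I * (exp (2 * uab a b t.2) * deriv (vab a b) t.2 : ℝ))
    =O[𝓟 (polarHalfDisc R)] fun t => t.1 ^ β := by
  have hone := isBigO_radius_rpow_one (R := R) hβ (Ioo 0 π)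
  have hratio := isBigO_exp_sub_one (hT.isBigO_polar_sub.const_mul_left 2) hone
  have hratio : (fun t => ((exp (2 * (polar U t - uab a b t.2)) - 1 : ℝ) : ℂ))
      =O[𝓟 (polarHalfDisc R)] fun t => t.1 ^ β :=
    isBigO_norm_left.1 (by simpa only [Complex.norm_real] using hratio.norm_left)
  have hV := hT.isBigO_exp_mul_polarGrad_sub
  refine ((hV.add (isBigO_mul_of_isBigO_one hratio (hV.trans hone))).add
    (isBigO_mul_of_isBigO_one hratio (isBigO_exp_two_mul_uab_mul_deriv_vab_one ha hb))).congr_left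
    fun t => ?_
  have hsplit : exp (2 * polar U t)
      = exp (2 * (polar U t - uab a b t.2)) * exp (2 * uab a b t.2) := by
    rw [← exp_add]
    ring_nf
  rw [hsplit]
  push_cast
  ring

lemma isBigO_polarGrad_quadrature_sub (hT : HasKerrTangent a b β R U V) (ha : 0 < a)
    (hb : b ∈ Ioo (-1 : ℝ) 1) (hβ : 0 ≤ β)
    (hA : DifferentiableOn ℝ (Function.uncurry A) (halfDisc R))
    (hU : DifferentiableOn ℝ (Function.uncurry U) (halfDisc R))
    (hV : DifferentiableOn ℝ (Function.uncurry V) (halfDisc R))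
    (hquad : ∀ p ∈ halfDisc R, IsQuadratureAt A U V p) :
    (fun t => polarGrad A t
      - Complex.I * (2 * (deriv (uab a b) t.2 + cos t.2 / sin t.2) : ℝ))
    =O[𝓟 (polarHalfDisc R)] fun t => t.1 ^ β := by
  have hone := isBigO_radius_rpow_one (R := R) hβ (Ioo 0 π)
  have hsin := isBigO_sin_one (𝓟 (polarHalfDisc R))
  have hsu : (fun t : ℝ × ℝ => (sin t.2 * (Complex.I * deriv (uab a b) t.2) : ℂ))
      =O[𝓟 (polarHalfDisc R)] (fun _ => (1 : ℝ)) := by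
    refine IsBigO.of_bound' (eventually_principal.2 fun t ht => ?_)
    rw [mul_left_comm, norm_mul, Complex.norm_I, one_mul, ← Complex.ofReal_mul, Complex.norm_real,
      norm_one]
    exact abs_sin_mul_deriv_uab_le_one ha hb ht.2
  have hsv := isBigO_mul_of_isBigO_one hsin
    (isBigO_exp_two_mul_uab_mul_deriv_vab_one (R := R) ha hb)
  have hu := isBigO_mul_sq_sub_sq hone hsin hsu hT.isBigO_polarGrad_sub
  have hv := isBigO_mul_sq_sub_sq hone hsin hsv
    (hT.isBigO_exp_polar_mul_polarGrad_sub ha hb hβ)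
  refine ((hT.isBigO_polarGrad_sub.const_mul_left 2).add
    (isBigO_mul_of_isBigO_one (hu.add hv) (isBigO_sin_sub_I_mul_cos_one _))).congr'
    (eventually_principal.2 fun t ht => ?_) EventuallyEq.rfl
  have hA_grad := (hquad _ (polarPt_mem_halfDisc ht)).polarGrad_eq (polarPt_mem_halfDisc ht).1.ne'
    (differentiableAt_polarPt hA ht) (differentiableAt_polarPt hU ht)
    (differentiableAt_polarPt hV ht)
  linear_combination -hA_grad - kerr_polarGrad_quadrature ha hb ht.2

theorem exists_isBigO_polar_sub_log (hT : HasKerrTangent a b β R U V) (ha : 0 < a)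
    (hb : b ∈ Ioo (-1 : ℝ) 1) (hβ : 0 < β)
    (hA : DifferentiableOn ℝ (Function.uncurry A) (halfDisc R))
    (hU : DifferentiableOn ℝ (Function.uncurry U) (halfDisc R))
    (hV : DifferentiableOn ℝ (Function.uncurry V) (halfDisc R))
    (hquad : ∀ p ∈ halfDisc R, IsQuadratureAt A U V p) :
    ∃ A₀, (fun t => polar A t - log (kerrDenom b (cos t.2)) - A₀)
      =O[𝓟 (polarHalfDisc R)] fun t => t.1 ^ β := by
  have hgrad := hT.isBigO_polarGrad_quadrature_sub ha hb hβ.le hA hU hV hquad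
  refine exists_isBigO_sub_const_of_polar_deriv (θ₀ := π / 2)
    (F := fun t => polar A t - log (kerrDenom b (cos t.2)))
    (Fr := fun t => deriv (fun r => polar A (r, t.2)) t.1)
    (Fθ := fun t => deriv (fun θ => polar A (t.1, θ)) t.2
      - 2 * (deriv (uab a b) t.2 + cos t.2 / sin t.2))
    hβ (convex_Ioo 0 π) (Metric.isBounded_Ioo 0 π) ⟨by positivity, by linarith [pi_pos]⟩
    (fun t ht => ?_) (fun t ht => ?_) ?_ ?_
  · exact (hasDerivAt_polar_radial
      (differentiableAt_polarPt hA ht)).differentiableAt.hasDerivAt.sub_const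
      (log (kerrDenom b (cos t.2)))
  · exact (hasDerivAt_polar_angular
      (differentiableAt_polarPt hA ht)).differentiableAt.hasDerivAt.sub
      (hasDerivAt_log_kerrDenom_cos ha hb ht.2)
  · refine IsBigO.trans (IsBigO.of_norm_le fun t => ?_) hgrad.norm_left
    have := Complex.abs_re_le_norm (polarGrad A t
      - Complex.I * (2 * (deriv (uab a b) t.2 + cos t.2 / sin t.2) : ℝ))
    rw [Complex.sub_re, Complex.I_mul_re, Complex.ofReal_im, neg_zero, sub_zero] at this
    exact this
  · refine IsBigO.trans (IsBigO.of_norm_le fun t => ?_) hgrad.norm_left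
    have := Complex.abs_im_le_norm (polarGrad A t
      - Complex.I * (2 * (deriv (uab a b) t.2 + cos t.2 / sin t.2) : ℝ))
    rw [Complex.sub_im, Complex.I_mul_im, Complex.ofReal_re] at this
    exact this

end HasKerrTangent

end KerrTangent

section Meridian

variable {w : E3 → ℝ} {w₀ : ℝ → ℝ} {R : ℝ} {t : ℝ × ℝ}

/-- The restriction of a function on `ℝ³` to the meridian half-plane `φ = 0`, in the coordinates
`(ρ, z)`. -/
def meridian (w : E3 → ℝ) (ρ z : ℝ) : ℝ := w (cylPt ρ z)

/-- The norm `|(r ∂_r)^l ∇^k (w(r, ·) - w₀)|` in the round metric, at the point of the meridian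
`φ = 0` with polar coordinates `t = (r, θ)`. -/
def deviation (l k : ℕ) (w : E3 → ℝ) (w₀ : ℝ → ℝ) (t : ℝ × ℝ) : ℝ :=
  covNorm k (fun θ φ => (Dr^[l] fun s θ φ => w (sph s θ φ) - w₀ θ) t.1 θ φ) t.2 0

lemma norm_cylPt (ρ z : ℝ) : ‖cylPt ρ z‖ = √(ρ ^ 2 + z ^ 2) := by
  simp [cylPt, EuclideanSpace.norm_eq, Fin.sum_univ_three]

lemma cylPt_mem_ball_diff_axis {p : ℝ × ℝ} (hp : p ∈ halfDisc R) :
    cylPt p.1 p.2 ∈ Metric.ball 0 R \ axisΓ :=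
  ⟨mem_ball_zero_iff.2 ((norm_cylPt p.1 p.2).trans_lt hp.2), fun h => hp.1.ne' h.1⟩

lemma differentiable_cylPt : Differentiable ℝ fun p : ℝ × ℝ => cylPt p.1 p.2 := by
  refine (EuclideanSpace.equiv (Fin 3) ℝ).symm.differentiable.comp (differentiable_pi.2 fun i => ?_)
  fin_cases i
  · exact differentiable_fst
  · exact differentiable_const 0
  · exact differentiable_snd

lemma differentiableOn_meridian (hw : DifferentiableOn ℝ w (Metric.ball 0 R \ axisΓ)) :
    DifferentiableOn ℝ (Function.uncurry (meridian w)) (halfDisc R) :=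
  hw.comp differentiable_cylPt.differentiableOn fun _ => cylPt_mem_ball_diff_axis

lemma polar_meridian (w : E3 → ℝ) (r θ : ℝ) : polar (meridian w) (r, θ) = w (sph r θ 0) := by
  simp [polar, meridian, sph, cylPt]

lemma covNorm_nonneg (k : ℕ) (f : ℝ → ℝ → ℝ) (θ φ : ℝ) : 0 ≤ covNorm k f θ φ :=
  sqrt_nonneg _

lemma covNorm_zero (f : ℝ → ℝ → ℝ) (θ φ : ℝ) : covNorm 0 f θ φ = |f θ φ| := by
  simp [covNorm, covIter, sqrt_sq_eq_abs]

lemma abs_pdθ_le_covNorm_one (f : ℝ → ℝ → ℝ) (θ φ : ℝ) : |pdθ f θ φ| ≤ covNorm 1 f θ φ := by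
  have hnonneg : ∀ I : Fin 1 → Fin 2,
      0 ≤ (∏ j, sphWeight (I j) θ) * covIter f 1 I θ φ ^ 2 := fun I =>
    mul_nonneg (Finset.prod_nonneg fun j _ => by unfold sphWeight; split_ifs <;> positivity)
      (sq_nonneg _)
  have hle := Finset.single_le_sum (fun I _ => hnonneg I) (Finset.mem_univ fun _ => 0)
  refine abs_le_sqrt (le_trans (le_of_eq ?_) hle)
  simp [sphWeight, covIter, covDer, pder2]

lemma deviation_nonneg (l k : ℕ) (w : E3 → ℝ) (w₀ : ℝ → ℝ) (t : ℝ × ℝ) :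
    0 ≤ deviation l k w w₀ t :=
  covNorm_nonneg _ _ _ _

lemma abs_polar_meridian_sub (w : E3 → ℝ) (w₀ : ℝ → ℝ) (t : ℝ × ℝ) :
    |polar (meridian w) t - w₀ t.2| = deviation 0 0 w w₀ t := by
  rw [deviation, covNorm_zero, Function.iterate_zero, id_eq, ← polar_meridian w]

lemma norm_polarGrad_meridian_sub_le
    (hw : DifferentiableOn ℝ w (Metric.ball 0 R \ axisΓ)) (ht : t ∈ polarHalfDisc R)
    (hw₀ : DifferentiableAt ℝ w₀ t.2) :
    ‖polarGrad (meridian w) t - Complex.I * deriv w₀ t.2‖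
      ≤ deviation 1 0 w w₀ t + deviation 0 1 w w₀ t := by
  have hpolar := (hasDerivAt_polar_angular
    (differentiableAt_polarPt (differentiableOn_meridian hw) ht)).differentiableAt
  refine (Complex.norm_le_abs_re_add_abs_im _).trans (add_le_add (le_of_eq ?_) ?_)
  · rw [Complex.sub_re, Complex.I_mul_re, Complex.ofReal_im, neg_zero, sub_zero, deviation,
      covNorm_zero, Function.iterate_one, Dr, deriv_sub_const, polarGrad]
    simp only [polar_meridian]
  · rw [Complex.sub_im, Complex.I_mul_im, Complex.ofReal_re, polarGrad, ← deriv_sub hpolar hw₀]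
    refine le_of_eq_of_le ?_ (abs_pdθ_le_covNorm_one _ _ _)
    simp only [Function.iterate_zero, id_eq, pdθ, ← polar_meridian]
    rfl

lemma hasKerrTangent_meridian {u v : E3 → ℝ} {a b α β C : ℝ} (ha : 0 < a)
    (hb : b ∈ Ioo (-1 : ℝ) 1) (hα : 0 ≤ α)
    (hu : DifferentiableOn ℝ u (Metric.ball 0 R \ axisΓ))
    (hv : DifferentiableOn ℝ v (Metric.ball 0 R \ axisΓ))
    (htan : ∀ l k : ℕ, l + k ≤ 1 → ∀ t ∈ polarHalfDisc R,
      deviation l k u (uab a b) t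
        + exp ((3 + α - k) * uab a b t.2) * deviation l k v (vab a b) t ≤ C * t.1 ^ β) :
    HasKerrTangent a b β R (meridian u) (meridian v) := by
  have hpow : ∀ {l k : ℕ}, l + k ≤ 1 → ∀ {f : ℝ × ℝ → ℝ}, (∀ t, 0 ≤ f t) →
      (∀ t, f t ≤ deviation l k u (uab a b) t
        + exp ((3 + α - k) * uab a b t.2) * deviation l k v (vab a b) t) →
      f =O[𝓟 (polarHalfDisc R)] fun t => t.1 ^ β := fun {l k} hlk f hf hle => by
    refine isBigO_principal.2 ⟨C, fun t ht => ?_⟩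
    rw [norm_of_nonneg (hf t), norm_of_nonneg (rpow_nonneg ht.1.1.le β)]
    exact (hle t).trans (htan l k hlk t ht)
  have hdev_u : ∀ {l k : ℕ}, l + k ≤ 1 →
      deviation l k u (uab a b) =O[𝓟 (polarHalfDisc R)] fun t => t.1 ^ β := fun hlk =>
    hpow hlk (deviation_nonneg _ _ _ _) fun t =>
      le_add_of_nonneg_right (mul_nonneg (exp_nonneg _) (deviation_nonneg ..))
  have hdev_v : ∀ {l k : ℕ}, l + k ≤ 1 →
      (fun t => exp (2 * uab a b t.2) * deviation l k v (vab a b) t)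
        =O[𝓟 (polarHalfDisc R)] fun t => t.1 ^ β := fun {l k} hlk => by
    have hk : (k : ℝ) ≤ 1 := by exact_mod_cast (Nat.le_add_left k l).trans hlk
    have hexp := (isBigO_exp_mul_uab ha hb
      (show 2 ≤ 3 + α - k by linarith)).comp_tendsto (k := Prod.snd) (l' := 𝓟 (polarHalfDisc R))
      (tendsto_principal_principal.2 fun t ht => ht.2)
    exact (hexp.mul (isBigO_refl (deviation l k v (vab a b)) _)).trans
      (hpow hlk (fun t => mul_nonneg (exp_nonneg _) (deviation_nonneg ..))
        fun t => le_add_of_nonneg_left (deviation_nonneg ..))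
  refine ⟨?_, ?_, ?_⟩
  · exact (IsBigO.of_norm_le fun t => (abs_polar_meridian_sub u _ t).le).trans
      (hdev_u zero_le_one)
  · refine (IsBigO.of_bound' (eventually_principal.2 fun t ht => ?_)).trans
      ((hdev_u (l := 1) (k := 0) le_rfl).add (hdev_u (l := 0) (k := 1) le_rfl))
    exact (norm_polarGrad_meridian_sub_le hu ht
      (hasDerivAt_uab ha hb ht.2).differentiableAt).trans (le_abs_self _)
  · refine (IsBigO.of_bound' (eventually_principal.2 fun t ht => ?_)).trans
      ((hdev_v (l := 1) (k := 0) le_rfl).add (hdev_v (l := 0) (k := 1) le_rfl))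
    rw [norm_mul, Complex.norm_real, norm_of_nonneg (exp_nonneg _), ← mul_add]
    refine le_trans ?_ (le_abs_self _)
    gcongr
    exact norm_polarGrad_meridian_sub_le hv ht (hasDerivAt_vab hb a t.2).differentiableAt

end Meridian

section AxisValues

variable {A : ℝ → ℝ → ℝ} {h : ℝ → ℝ} {A₀ C L R β σ z : ℝ}

lemma abs_sub_le_of_tendsto_axis
    (hA : ∀ t ∈ polarHalfDisc R, |polar A t - h (cos t.2) - A₀| ≤ C * t.1 ^ β)
    (hz : z ≠ 0) (hzR : |z| < R) (hh : ContinuousAt h (z / |z|))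
    (hL : Tendsto (fun ρ => A ρ z) (𝓝[>] 0) (𝓝 L)) :
    |L - h (z / |z|) - A₀| ≤ C * |z| ^ β := by
  have hz_pos := abs_pos.2 hz
  have hradius : Tendsto (fun ρ : ℝ => √(ρ ^ 2 + z ^ 2)) (𝓝[>] 0) (𝓝 |z|) := by
    have hcont : ContinuousAt (fun ρ : ℝ => √(ρ ^ 2 + z ^ 2)) 0 := by fun_prop
    have hval : √((0 : ℝ) ^ 2 + z ^ 2) = |z| := by
      rw [zero_pow two_ne_zero, zero_add, sqrt_sq_eq_abs]
    exact hval ▸ hcont.tendsto.mono_left nhdsWithin_le_nhds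
  have hcos := hh.tendsto.comp (tendsto_const_nhds.div hradius hz_pos.ne')
  refine le_of_tendsto_of_tendsto ((hL.sub hcos).sub_const A₀).abs
    ((hradius.rpow_const (Or.inl hz_pos.ne')).const_mul C) ?_
  filter_upwards [hradius.eventually_lt_const hzR, self_mem_nhdsWithin] with ρ hρR hρ
  obtain ⟨t, ht, hpt⟩ := exists_polarPt_eq (p := (ρ, z)) ⟨hρ, hρR⟩
  have hr := sqrt_polarPt_sq_add_sq ht.1.1.le
  have hsin : t.1 * sin t.2 = ρ := congrArg Prod.fst hpt
  have hcos : t.1 * cos t.2 = z := congrArg Prod.snd hpt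
  have hbound := hA t ht
  rw [hpt] at hr
  rwa [polar, hsin, hcos, ← mul_div_cancel_left₀ (cos t.2) ht.1.1.ne', hcos, ← hr] at hbound

lemma eq_of_tendsto_axis
    (hA : ∀ t ∈ polarHalfDisc R, |polar A t - h (cos t.2) - A₀| ≤ C * t.1 ^ β)
    (hβ : 0 < β) (hR : 0 < R) (hσ : |σ| = 1) (hh : ContinuousAt h σ)
    (hL : ∀ r ∈ Ioo 0 R, Tendsto (fun ρ => A ρ (σ * r)) (𝓝[>] 0) (𝓝 L)) :
    L = h σ + A₀ := by
  have hbound : ∀ r ∈ Ioo 0 R, |L - h σ - A₀| ≤ C * r ^ β := fun r hr => by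
    have habs : |σ * r| = r := by rw [abs_mul, hσ, one_mul, abs_of_pos hr.1]
    have hdir : σ * r / |σ * r| = σ := by rw [habs, mul_div_cancel_right₀ _ hr.1.ne']
    have hle := abs_sub_le_of_tendsto_axis hA (abs_pos.1 (habs.symm ▸ hr.1)) (habs.trans_lt hr.2)
      (hdir.symm ▸ hh) (hL r hr)
    rwa [hdir, habs] at hle
  have hzero : Tendsto (fun r : ℝ => C * r ^ β) (𝓝[>] 0) (𝓝 0) := by
    have hcont := (continuousAt_rpow_const 0 β (Or.inr hβ.le)).tendsto.const_mul C
    rw [zero_rpow hβ.ne', mul_zero] at hcont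
    exact hcont.mono_left nhdsWithin_le_nhds
  have hle : |L - h σ - A₀| ≤ 0 :=
    ge_of_tendsto hzero (mem_of_superset (Ioo_mem_nhdsGT hR) hbound)
  linarith [abs_nonpos_iff.1 hle]

lemma log_kerrDenom_one_sub_log_kerrDenom_neg_one {b : ℝ} (hb : b ∈ Ioo (-1 : ℝ) 1) :
    log (kerrDenom b 1) - log (kerrDenom b (-1)) = log ((1 + b) / (1 - b)) := by
  rw [← log_div (kerrDenom_pos hb 1).ne' (kerrDenom_pos hb (-1)).ne',
    show kerrDenom b 1 = 2 * (1 + b) by unfold kerrDenom; ring,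
    show kerrDenom b (-1) = 2 * (1 - b) by unfold kerrDenom; ring,
    mul_div_mul_left _ _ two_ne_zero]

lemma axis_value_sub_eq_log {b bp bm : ℝ} (hb : b ∈ Ioo (-1 : ℝ) 1)
    (hA : ∀ t ∈ polarHalfDisc R, |polar A t - log (kerrDenom b (cos t.2)) - A₀| ≤ C * t.1 ^ β)
    (hβ : 0 < β) (hR : 0 < R)
    (hbp : ∀ z ∈ Ioo 0 R, Tendsto (fun ρ => A ρ z) (𝓝[>] 0) (𝓝 bp))
    (hbm : ∀ z ∈ Ioo (-R) 0, Tendsto (fun ρ => A ρ z) (𝓝[>] 0) (𝓝 bm)) :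
    bp - bm = log ((1 + b) / (1 - b)) := by
  have hcont : ∀ x, ContinuousAt (fun x => log (kerrDenom b x)) x := fun x => by
    refine ContinuousAt.log ?_ (kerrDenom_pos hb x).ne'
    unfold kerrDenom
    fun_prop
  have hp := eq_of_tendsto_axis (h := fun x => log (kerrDenom b x)) (σ := 1) hA hβ hR abs_one
    (hcont 1) fun r hr => by simpa only [one_mul] using hbp r hr
  have hm := eq_of_tendsto_axis (h := fun x => log (kerrDenom b x)) (σ := -1) hA hβ hR
    (by rw [abs_neg, abs_one]) (hcont (-1)) fun r hr =>
      hbm (-1 * r) ⟨by linarith [hr.2], by linarith [hr.1]⟩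
  rw [hp, hm, ← log_kerrDenom_one_sub_log_kerrDenom_neg_one hb]
  ring

end AxisValues

theorem statement_5_general {u v : E3 → ℝ} {A : ℝ → ℝ → ℝ} {a b α β C R : ℝ}
    (ha : 0 < a) (hb : b ∈ Ioo (-1 : ℝ) 1) (hα : 0 ≤ α) (hβ : 0 < β) (hR : 0 < R)
    (hu : DifferentiableOn ℝ u (Metric.ball 0 R \ axisΓ))
    (hv : DifferentiableOn ℝ v (Metric.ball 0 R \ axisΓ))
    (htan : ∀ l k : ℕ, l + k ≤ 1 → ∀ t ∈ polarHalfDisc R,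
      deviation l k u (uab a b) t
        + exp ((3 + α - k) * uab a b t.2) * deviation l k v (vab a b) t ≤ C * t.1 ^ β)
    (hA : DifferentiableOn ℝ (Function.uncurry A) (halfDisc R))
    (hquad : ∀ p ∈ halfDisc R, IsQuadratureAt A (meridian u) (meridian v) p) :
    ∃ A₀, ∃ C' > 0,
      (∀ t ∈ polarHalfDisc R, |polar A t - log (kerrDenom b (cos t.2)) - A₀| ≤ C' * t.1 ^ β) ∧
      ∀ bp bm : ℝ,
        (∀ z ∈ Ioo 0 R, Tendsto (fun ρ => A ρ z) (𝓝[>] 0) (𝓝 bp)) →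
        (∀ z ∈ Ioo (-R) 0, Tendsto (fun ρ => A ρ z) (𝓝[>] 0) (𝓝 bm)) →
        bp - bm = log ((1 + b) / (1 - b)) := by
  obtain ⟨A₀, hA₀⟩ := (hasKerrTangent_meridian ha hb hα hu hv htan).exists_isBigO_polar_sub_log
    ha hb hβ hA (differentiableOn_meridian hu) (differentiableOn_meridian hv) hquad
  obtain ⟨C', hC', hbound⟩ := hA₀.exists_pos
  have hexpansion : ∀ t ∈ polarHalfDisc R,
      |polar A t - log (kerrDenom b (cos t.2)) - A₀| ≤ C' * t.1 ^ β := fun t ht =>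
    (isBigOWith_principal.1 hbound t ht).trans_eq
      (by rw [norm_of_nonneg (rpow_nonneg ht.1.1.le β)])
  exact ⟨A₀, C', hC', hexpansion, fun bp bm => axis_value_sub_eq_log hb hexpansion hβ hR⟩

/-- Theorem `conicalsing`: expansion of the metric coefficient `𝛂`
near an extreme puncture, and the formula `𝐛₊ − 𝐛₋ = ln((1+b)/(1−b))` for the
difference of logarithmic angle defects of the adjacent axis rods. -/
theorem statement_5
    (u v : E3 → ℝ)
    (hharm : HarmonicPair u v (B1 \ axisΓ))
    (haxiu : ∀ r θ φ φ' : ℝ, u (sph r θ φ) = u (sph r θ φ'))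
    (haxiv : ∀ r θ φ φ' : ℝ, v (sph r θ φ) = v (sph r θ φ'))
    (a b α β C : ℝ) (ha : 0 < a) (hb : b ∈ Ioo (-1 : ℝ) 1)
    (hα : α ∈ Ioo (1 / 2 : ℝ) 1) (hβ : 0 < β) (hC : 0 < C)
    (htan : ∀ l k : ℕ, l + k ≤ 1 →
      ∀ r ∈ Ioo (0 : ℝ) (1 / 2), ∀ θ ∈ Ioo (0 : ℝ) π, ∀ φ : ℝ,
        covNorm k (fun θ' φ' =>
            (Dr^[l] (fun s θ'' φ'' => u (sph s θ'' φ'') - uab a b θ'')) r θ' φ') θ φ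
          + Real.exp ((3 + α - k) * uab a b θ) *
            covNorm k (fun θ' φ' =>
              (Dr^[l] (fun s θ'' φ'' => v (sph s θ'' φ'') - vab a b θ'')) r θ' φ') θ φ
        ≤ C * r ^ β)
    (A : ℝ → ℝ → ℝ)
    (hAreg : ContDiffOn ℝ 1 (fun p : ℝ × ℝ => A p.1 p.2)
      {p : ℝ × ℝ | 0 < p.1 ∧ Real.sqrt (p.1 ^ 2 + p.2 ^ 2) < 1 / 2})
    (hAρ : ∀ p : ℝ × ℝ, 0 < p.1 → Real.sqrt (p.1 ^ 2 + p.2 ^ 2) < 1 / 2 →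
      dρ A p.1 p.2 =
        2 * dρ (fun ρ z => u (cylPt ρ z)) p.1 p.2 + p.1⁻¹
          + p.1 * ((dρ (fun ρ z => u (cylPt ρ z)) p.1 p.2) ^ 2
              - (dz (fun ρ z => u (cylPt ρ z)) p.1 p.2) ^ 2
              + Real.exp (4 * u (cylPt p.1 p.2)) *
                ((dρ (fun ρ z => v (cylPt ρ z)) p.1 p.2) ^ 2
                  - (dz (fun ρ z => v (cylPt ρ z)) p.1 p.2) ^ 2)))
    (hAz : ∀ p : ℝ × ℝ, 0 < p.1 → Real.sqrt (p.1 ^ 2 + p.2 ^ 2) < 1 / 2 →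
      dz A p.1 p.2 =
        2 * dz (fun ρ z => u (cylPt ρ z)) p.1 p.2
          + 2 * p.1 * (dρ (fun ρ z => u (cylPt ρ z)) p.1 p.2
                * dz (fun ρ z => u (cylPt ρ z)) p.1 p.2
              + Real.exp (4 * u (cylPt p.1 p.2)) *
                dρ (fun ρ z => v (cylPt ρ z)) p.1 p.2
                * dz (fun ρ z => v (cylPt ρ z)) p.1 p.2)) :
    ∃ A₀ : ℝ, ∃ C' > (0 : ℝ), ∃ β' > (0 : ℝ),
      (∀ r ∈ Ioo (0 : ℝ) (1 / 2), ∀ θ ∈ Ioo (0 : ℝ) π,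
        |A (r * Real.sin θ) (r * Real.cos θ)
            - Real.log (1 + Real.cos θ ^ 2 + 2 * b * Real.cos θ) - A₀|
          ≤ C' * r ^ β') ∧
      ∀ bp bm : ℝ,
        (∀ z ∈ Ioo (0 : ℝ) (1 / 2),
          Tendsto (fun ρ => A ρ z) (nhdsWithin 0 (Ioi 0)) (nhds bp)) →
        (∀ z ∈ Ioo (-(1 / 2) : ℝ) 0,
          Tendsto (fun ρ => A ρ z) (nhdsWithin 0 (Ioi 0)) (nhds bm)) →
        bp - bm = Real.log ((1 + b) / (1 - b)) := by
  have hball : Metric.ball 0 (1 / 2) \ axisΓ ⊆ B1 \ axisΓ :=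
    sdiff_subset_sdiff_left (Metric.ball_subset_ball (by norm_num))
  obtain ⟨A₀, C', hC', hA⟩ := statement_5_general ha hb (by linarith [hα.1]) hβ one_half_pos
    ((hharm.1.differentiableOn (by norm_num)).mono hball)
    ((hharm.2.1.differentiableOn (by norm_num)).mono hball)
    (fun l k hlk t ht => htan l k hlk t.1 ht.1 t.2 ht.2 0)
    (hAreg.differentiableOn one_ne_zero) fun p hp => ⟨hAρ p hp.1 hp.2, hAz p hp.1 hp.2⟩
  exact ⟨A₀, C', hC', β, hβ, fun r hr θ hθ => hA.1 (r, θ) ⟨hr, hθ⟩, hA.2⟩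
end
end

section
/- Let ω be a renormalizer on (−2,2) with L ln ω = 0, and let (Φ,v) be a classical solution of the renormalized harmonic map system on (−2,2)×S² with constants Λ ≥ 1 and a > 0. Then for every 0 < R < 2: ∫_{−R}^{R} ∫_{S²} ( |∇_gΦ|² + e^{4u}|∇_g v|² ) dvol_{g₀} dt ≤ 5000·Λ² / (2−R)². -/
open Real MeasureTheory Set Filter

noncomputable section

/-- `t`-partial derivative on the cylinder. -/
def cdt (F : ℝ → ℝ → ℝ → ℝ) : ℝ → ℝ → ℝ → ℝ := fun t θ φ => deriv (fun s => F s θ φ) t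

/-- `θ`-partial derivative on the cylinder. -/
def cdθ (F : ℝ → ℝ → ℝ → ℝ) : ℝ → ℝ → ℝ → ℝ := fun t => pdθ (F t)

/-- `φ`-partial derivative on the cylinder. -/
def cdφ (F : ℝ → ℝ → ℝ → ℝ) : ℝ → ℝ → ℝ → ℝ := fun t => pdφ (F t)

/-- the operator `L = ∂_t² − ∂_t + Δ_{g₀}` on the cylinder. -/
def cL (F : ℝ → ℝ → ℝ → ℝ) : ℝ → ℝ → ℝ → ℝ := fun t θ φ =>
  cdt (cdt F) t θ φ - cdt F t θ φ + lapS2 (F t) θ φ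

/-- `∇_g F·∇_g G` for the product metric `g = dt² + g₀`. -/
def cgradDot (F G : ℝ → ℝ → ℝ → ℝ) (t θ φ : ℝ) : ℝ :=
  cdt F t θ φ * cdt G t θ φ + gradDotS2 (F t) (G t) θ φ

/-- `|∇_g F|²` for the product metric `g = dt² + g₀`. -/
def cgradNormSq (F : ℝ → ℝ → ℝ → ℝ) (t θ φ : ℝ) : ℝ := cgradDot F F t θ φ

/-- a renormalizer `ω` on the interval `I`: positive and smooth away from the poles,
with `ln ω − ln sinθ` extending continuously to `I×S²` together with all its
coordinate derivatives of order `≤ 10`, bounded in absolute value by `A₁ ≥ 1`. -/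
structure Renormalizer (I : Set ℝ) (A₁ : ℝ) : Type where
  ω : ℝ → ℝ → ℝ → ℝ
  A₁_ge : 1 ≤ A₁
  pos : ∀ t ∈ I, ∀ θ ∈ Ioo (0 : ℝ) π, ∀ φ : ℝ, 0 < ω t θ φ
  periodic : ∀ t θ φ : ℝ, ω t θ (φ + 2 * π) = ω t θ φ
  smooth : ContDiffOn ℝ (⊤ : ℕ∞) (fun p : ℝ × ℝ × ℝ => ω p.1 p.2.1 p.2.2)
    (I ×ˢ (Ioo (0 : ℝ) π ×ˢ (univ : Set ℝ)))
  deriv_ext : ∀ m l n : ℕ, m + l + n ≤ 10 →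
    ∃ G : ℝ → ℝ → ℝ → ℝ,
      ContinuousOn (fun p : ℝ × ℝ × ℝ => G p.1 p.2.1 p.2.2)
        (I ×ˢ (Icc (0 : ℝ) π ×ˢ (univ : Set ℝ))) ∧
      (∀ t ∈ I, ∀ θ ∈ Ioo (0 : ℝ) π, ∀ φ : ℝ,
        G t θ φ = (cdt^[m] (cdθ^[l] (cdφ^[n]
          (fun t θ φ => Real.log (ω t θ φ) - Real.log (Real.sin θ))))) t θ φ) ∧
      (∀ t ∈ I, ∀ θ ∈ Icc (0 : ℝ) π, ∀ φ : ℝ, |G t θ φ| ≤ A₁)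

/-- a classical solution `(Φ, v)` of the renormalized harmonic map system on `I×S²`,
with constants `Λ ≥ 1` and `a > 0`:  `C³` on `I×S²` and smooth in `t` and `φ`,
satisfying `LΦ = 2e^{4u}|∇_g v|² + L ln ω` and `Lv = −4∇_g u·∇_g v` (where
`u = Φ − ln ω`), `|Φ| ≤ Λ`, with locally finite renormalized energy, and with
traces `v = a` at the north pole and `v = −a` at the south pole. -/
structure RHMSolution (I : Set ℝ) (A₁ : ℝ) (R : Renormalizer I A₁) (Λ a : ℝ) :
    Type where
  Φ : ℝ → ℝ → ℝ → ℝ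
  v : ℝ → ℝ → ℝ → ℝ
  Λ_ge : 1 ≤ Λ
  a_pos : 0 < a
  periodicΦ : ∀ t θ φ : ℝ, Φ t θ (φ + 2 * π) = Φ t θ φ
  periodicv : ∀ t θ φ : ℝ, v t θ (φ + 2 * π) = v t θ φ
  regΦ : ContDiffOn ℝ 3 (fun p : ℝ × ℝ × ℝ => Φ p.1 p.2.1 p.2.2)
    (I ×ˢ (Icc (0 : ℝ) π ×ˢ (univ : Set ℝ)))
  regv : ContDiffOn ℝ 3 (fun p : ℝ × ℝ × ℝ => v p.1 p.2.1 p.2.2)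
    (I ×ˢ (Icc (0 : ℝ) π ×ˢ (univ : Set ℝ)))
  smooth_tφ_Φ : ∀ θ ∈ Icc (0 : ℝ) π,
    ContDiffOn ℝ (⊤ : ℕ∞) (fun q : ℝ × ℝ => Φ q.1 θ q.2) (I ×ˢ (univ : Set ℝ))
  smooth_tφ_v : ∀ θ ∈ Icc (0 : ℝ) π,
    ContDiffOn ℝ (⊤ : ℕ∞) (fun q : ℝ × ℝ => v q.1 θ q.2) (I ×ˢ (univ : Set ℝ))
  eqΦ : ∀ t ∈ I, ∀ θ ∈ Ioo (0 : ℝ) π, ∀ φ : ℝ,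
    cL Φ t θ φ =
      2 * Real.exp (4 * (Φ t θ φ - Real.log (R.ω t θ φ))) * cgradNormSq v t θ φ
        + cL (fun t θ φ => Real.log (R.ω t θ φ)) t θ φ
  eqv : ∀ t ∈ I, ∀ θ ∈ Ioo (0 : ℝ) π, ∀ φ : ℝ,
    cL v t θ φ =
      -4 * cgradDot (fun t θ φ => Φ t θ φ - Real.log (R.ω t θ φ)) v t θ φ
  bddΦ : ∀ t ∈ I, ∀ θ ∈ Icc (0 : ℝ) π, ∀ φ : ℝ, |Φ t θ φ| ≤ Λ
  energy_loc : ∀ J : Set ℝ, J ⊆ I → IsCompact J →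
    IntegrableOn (fun p : ℝ × ℝ × ℝ =>
      (cgradNormSq Φ p.1 p.2.1 p.2.2
        + ((R.ω p.1 p.2.1 p.2.2) ^ 4)⁻¹ * cgradNormSq v p.1 p.2.1 p.2.2)
        * Real.sin p.2.1)
      (J ×ˢ (Ioo (0 : ℝ) π ×ˢ Ioo (0 : ℝ) (2 * π))) volume
  traceN : ∀ t ∈ I, ∀ φ : ℝ, v t 0 φ = a
  traceS : ∀ t ∈ I, ∀ φ : ℝ, v t π φ = -a

/-!
If `|Φ| ≤ Λ` then `w = Φ + Λ + 1/2` lies in `[1/2, 2Λ + 1/2]`. Since `L ln ω = 0`, the equation for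
`Φ` reads `LΦ = 2e` with `e = e^{4u}|∇_g v|²`, so `L(w²) = 2(|∇_gΦ|² + w LΦ) ≥ 2(|∇_gΦ|² + e)`:
the bounded function `w²` is a subsolution whose defect dominates the energy density. Testing with
`ζ(t) = (r² − t²)²` and integrating by parts leaves `∫ (ζ'' + ζ') w²`, which is at most
`sup (ζ'' + ζ') · sup w²` times the volume. As `L` is singular at the poles in these coordinates,
polar caps of radius `ε` are removed first; the flux through their boundary is `O(sin ε)`.
-/

section FundamentalTheorem

variable {a b : ℝ}

lemma integral_mul_deriv2_sub_deriv {ζ ζ' ζ'' g g' g'' : ℝ → ℝ}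
    (hζ : ∀ t ∈ uIcc a b, HasDerivAt ζ (ζ' t) t) (hζ' : ∀ t ∈ uIcc a b, HasDerivAt ζ' (ζ'' t) t)
    (hg : ∀ t ∈ uIcc a b, HasDerivAt g (g' t) t) (hg' : ∀ t ∈ uIcc a b, HasDerivAt g' (g'' t) t)
    (cζ'' : ContinuousOn ζ'' (uIcc a b)) (cg'' : ContinuousOn g'' (uIcc a b))
    (ha : ζ a = 0) (hb : ζ b = 0) (ha' : ζ' a = 0) (hb' : ζ' b = 0) :
    ∫ t in a..b, ζ t * (g'' t - g' t) = ∫ t in a..b, (ζ'' t + ζ' t) * g t := by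
  have cζ : ContinuousOn ζ (uIcc a b) := HasDerivAt.continuousOn hζ
  have cζ' : ContinuousOn ζ' (uIcc a b) := HasDerivAt.continuousOn hζ'
  have cg : ContinuousOn g (uIcc a b) := HasDerivAt.continuousOn hg
  have cg' : ContinuousOn g' (uIcc a b) := HasDerivAt.continuousOn hg'
  have lhs_int : IntervalIntegrable (fun t => ζ t * (g'' t - g' t)) volume a b :=
    (cζ.mul (cg''.sub cg')).intervalIntegrable
  have rhs_int : IntervalIntegrable (fun t => (ζ'' t + ζ' t) * g t) volume a b :=
    ((cζ''.add cζ').mul cg).intervalIntegrable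
  have primitive : ∀ t ∈ uIcc a b, HasDerivAt (fun t => ζ t * g' t - (ζ' t + ζ t) * g t)
      (ζ t * (g'' t - g' t) - (ζ'' t + ζ' t) * g t) t := fun t ht =>
    (((hζ t ht).mul (hg' t ht)).sub
      (((hζ' t ht).add (hζ t ht)).mul (hg t ht))).congr_deriv (by simp only [Pi.add_apply]; ring)
  rw [← sub_eq_zero, ← intervalIntegral.integral_sub lhs_int rhs_int,
    intervalIntegral.integral_eq_sub_of_hasDerivAt primitive (lhs_int.sub rhs_int)]
  simp only [ha, hb, ha', hb']
  ring

lemma integral_deriv2_add_cot_mul_deriv_mul_sin {g' g'' : ℝ → ℝ}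
    (hsin : ∀ θ ∈ uIcc a b, sin θ ≠ 0) (hg' : ∀ θ ∈ uIcc a b, HasDerivAt g' (g'' θ) θ)
    (cg'' : ContinuousOn g'' (uIcc a b)) :
    ∫ θ in a..b, (g'' θ + cos θ / sin θ * g' θ) * sin θ = sin b * g' b - sin a * g' a := by
  have primitive : ∀ θ ∈ uIcc a b, HasDerivAt (fun θ => sin θ * g' θ)
      ((g'' θ + cos θ / sin θ * g' θ) * sin θ) θ := fun θ hθ =>
    ((hasDerivAt_sin θ).mul (hg' θ hθ)).congr_deriv (by field_simp [hsin θ hθ]; ring)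
  have cg' : ContinuousOn g' (uIcc a b) := HasDerivAt.continuousOn hg'
  have ccot : ContinuousOn (fun θ => cos θ / sin θ) (uIcc a b) :=
    continuousOn_cos.div continuousOn_sin hsin
  exact intervalIntegral.integral_eq_sub_of_hasDerivAt primitive
    ((cg''.add (ccot.mul cg')).mul continuousOn_sin).intervalIntegrable

lemma abs_integral_deriv2_add_cot_mul_deriv_mul_sin_le {g' g'' : ℝ → ℝ} {ε K : ℝ}
    (hε : 0 < ε) (hε' : ε ≤ π / 2) (hg' : ∀ θ ∈ Icc ε (π - ε), HasDerivAt g' (g'' θ) θ)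
    (cg'' : ContinuousOn g'' (Icc ε (π - ε))) (hK : ∀ θ ∈ Ioo 0 π, |g' θ| ≤ K) :
    |∫ θ in ε..(π - ε), (g'' θ + cos θ / sin θ * g' θ) * sin θ| ≤ 2 * (K * sin ε) := by
  have interval : uIcc ε (π - ε) = Icc ε (π - ε) := uIcc_of_le (by linarith)
  have sin_pos (θ) (hθ : θ ∈ Icc ε (π - ε)) : 0 < sin θ :=
    sin_pos_of_pos_of_lt_pi (hε.trans_le hθ.1) (by linarith [hθ.2])
  have sin_ε : 0 ≤ sin ε := (sin_pos ε ⟨le_rfl, by linarith⟩).le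
  rw [← interval] at hg' cg'' sin_pos
  calc |∫ θ in ε..(π - ε), (g'' θ + cos θ / sin θ * g' θ) * sin θ|
      = |g' (π - ε) - g' ε| * sin ε := by
        rw [integral_deriv2_add_cot_mul_deriv_mul_sin (fun θ hθ => (sin_pos θ hθ).ne') hg' cg'',
          sin_pi_sub, ← mul_sub, abs_mul, abs_of_nonneg sin_ε, mul_comm]
    _ ≤ (K + K) * sin ε :=
        mul_le_mul_of_nonneg_right ((abs_sub _ _).trans (add_le_add
          (hK _ ⟨by linarith, by linarith⟩) (hK _ ⟨hε, by linarith⟩))) sin_ε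
    _ = 2 * (K * sin ε) := by ring

lemma periodic_deriv {g : ℝ → ℝ} {c : ℝ} (hg : Function.Periodic g c) :
    Function.Periodic (deriv g) c := fun x => by
  rw [← deriv_comp_add_const, hg.funext]

end FundamentalTheorem

section Fubini

lemma setIntegral_prod_symm {α β : Type*} [MeasurableSpace α] [MeasurableSpace β]
    {μ : Measure α} {ν : Measure β} [SFinite μ] [SFinite ν] {f : α × β → ℝ} {s : Set α} {t : Set β}
    (hf : IntegrableOn f (s ×ˢ t) (μ.prod ν)) :
    ∫ z in s ×ˢ t, f z ∂μ.prod ν = ∫ y in t, ∫ x in s, f (x, y) ∂μ ∂ν := by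
  rw [IntegrableOn, ← Measure.prod_restrict] at hf
  rw [← Measure.prod_restrict, integral_prod_symm f hf]

variable {a b c d e f : ℝ} {D : ℝ × ℝ × ℝ → ℝ}

lemma setIntegral_Icc_eq_intervalIntegral (hab : a ≤ b) (g : ℝ → ℝ) :
    ∫ x in Icc a b, g x = ∫ x in a..b, g x := by
  rw [integral_Icc_eq_integral_Ioc, intervalIntegral.integral_of_le hab]

lemma integrableOn_box (hD : ContinuousOn D (Icc a b ×ˢ Icc c d ×ˢ Icc e f)) :
    IntegrableOn D (Icc a b ×ˢ Icc c d ×ˢ Icc e f) :=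
  hD.integrableOn_compact (isCompact_Icc.prod (isCompact_Icc.prod isCompact_Icc))

lemma integrableOn_box_slice (hD : ContinuousOn D (Icc a b ×ˢ Icc c d ×ˢ Icc e f))
    {t : ℝ} (ht : t ∈ Icc a b) :
    IntegrableOn (fun q => D (t, q)) (Icc c d ×ˢ Icc e f) :=
  (hD.comp (by fun_prop) fun _ hq => ⟨ht, hq⟩).integrableOn_compact
    (isCompact_Icc.prod isCompact_Icc)

lemma setIntegral_box_fst (hab : a ≤ b)
    (hD : ContinuousOn D (Icc a b ×ˢ Icc c d ×ˢ Icc e f)) :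
    ∫ p in Icc a b ×ˢ Icc c d ×ˢ Icc e f, D p =
      ∫ q in Icc c d ×ˢ Icc e f, ∫ x in a..b, D (x, q) := by
  simp only [← setIntegral_Icc_eq_intervalIntegral hab]
  exact setIntegral_prod_symm (integrableOn_box hD)

lemma setIntegral_box_snd (hcd : c ≤ d)
    (hD : ContinuousOn D (Icc a b ×ˢ Icc c d ×ˢ Icc e f)) :
    ∫ p in Icc a b ×ˢ Icc c d ×ˢ Icc e f, D p =
      ∫ x in Icc a b, ∫ z in Icc e f, ∫ y in c..d, D (x, y, z) := by
  simp only [← setIntegral_Icc_eq_intervalIntegral hcd]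
  exact (setIntegral_prod _ (integrableOn_box hD)).trans <|
    setIntegral_congr_fun measurableSet_Icc fun _ hx =>
      setIntegral_prod_symm (integrableOn_box_slice hD hx)

lemma setIntegral_box_trd (hef : e ≤ f)
    (hD : ContinuousOn D (Icc a b ×ˢ Icc c d ×ˢ Icc e f)) :
    ∫ p in Icc a b ×ˢ Icc c d ×ˢ Icc e f, D p =
      ∫ x in Icc a b, ∫ y in Icc c d, ∫ z in e..f, D (x, y, z) := by
  simp only [← setIntegral_Icc_eq_intervalIntegral hef]
  exact (setIntegral_prod _ (integrableOn_box hD)).trans <|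
    setIntegral_congr_fun measurableSet_Icc fun _ hx =>
      setIntegral_prod _ (integrableOn_box_slice hD hx)

end Fubini

section PartialDerivatives

variable {F : ℝ → ℝ → ℝ → ℝ} {t θ φ : ℝ} {U : Set (ℝ × ℝ × ℝ)} {m n : WithTop ℕ∞}

lemma hasDerivAt_slice_t (h : DifferentiableAt ℝ ↿F (t, θ, φ)) :
    HasDerivAt (fun s => F s θ φ) (fderiv ℝ ↿F (t, θ, φ) (1, 0, 0)) t :=
  h.hasFDerivAt.comp_hasDerivAt (f := fun s => (s, θ, φ)) t
    ((hasDerivAt_id t).prodMk (hasDerivAt_const t (θ, φ)))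

lemma hasDerivAt_slice_θ (h : DifferentiableAt ℝ ↿F (t, θ, φ)) :
    HasDerivAt (fun s => F t s φ) (fderiv ℝ ↿F (t, θ, φ) (0, 1, 0)) θ :=
  h.hasFDerivAt.comp_hasDerivAt (f := fun s => (t, s, φ)) θ
    ((hasDerivAt_const θ t).prodMk ((hasDerivAt_id θ).prodMk (hasDerivAt_const θ φ)))

lemma hasDerivAt_slice_φ (h : DifferentiableAt ℝ ↿F (t, θ, φ)) :
    HasDerivAt (fun s => F t θ s) (fderiv ℝ ↿F (t, θ, φ) (0, 0, 1)) φ :=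
  h.hasFDerivAt.comp_hasDerivAt (f := fun s => (t, θ, s)) φ
    ((hasDerivAt_const φ t).prodMk ((hasDerivAt_const φ θ).prodMk (hasDerivAt_id φ)))

lemma hasDerivAt_cdt (h : DifferentiableAt ℝ ↿F (t, θ, φ)) :
    HasDerivAt (fun s => F s θ φ) (cdt F t θ φ) t :=
  (hasDerivAt_slice_t h).differentiableAt.hasDerivAt

lemma hasDerivAt_cdθ (h : DifferentiableAt ℝ ↿F (t, θ, φ)) :
    HasDerivAt (fun s => F t s φ) (cdθ F t θ φ) θ :=
  (hasDerivAt_slice_θ h).differentiableAt.hasDerivAt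

lemma hasDerivAt_cdφ (h : DifferentiableAt ℝ ↿F (t, θ, φ)) :
    HasDerivAt (fun s => F t θ s) (cdφ F t θ φ) φ :=
  (hasDerivAt_slice_φ h).differentiableAt.hasDerivAt

lemma differentiableAt_of_contDiffOn (hU : IsOpen U) (h : ContDiffOn ℝ n ↿F U) (hn : 1 ≤ n)
    {p : ℝ × ℝ × ℝ} (hp : p ∈ U) : DifferentiableAt ℝ ↿F p :=
  (h.contDiffAt (hU.mem_nhds hp)).differentiableAt (by positivity)

lemma contDiffOn_fderiv_apply (hU : IsOpen U) (h : ContDiffOn ℝ n ↿F U) (hmn : m + 1 ≤ n)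
    (w : ℝ × ℝ × ℝ) : ContDiffOn ℝ m (fun p => fderiv ℝ ↿F p w) U :=
  (h.fderiv_of_isOpen hU hmn).clm_apply contDiffOn_const

lemma contDiffOn_cdt (hU : IsOpen U) (h : ContDiffOn ℝ n ↿F U) (hmn : m + 1 ≤ n) :
    ContDiffOn ℝ m ↿(cdt F) U :=
  (contDiffOn_fderiv_apply hU h hmn (1, 0, 0)).congr fun _ hp =>
    (hasDerivAt_slice_t (differentiableAt_of_contDiffOn hU h (le_add_self.trans hmn) hp)).deriv

lemma contDiffOn_cdθ (hU : IsOpen U) (h : ContDiffOn ℝ n ↿F U) (hmn : m + 1 ≤ n) :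
    ContDiffOn ℝ m ↿(cdθ F) U :=
  (contDiffOn_fderiv_apply hU h hmn (0, 1, 0)).congr fun _ hp =>
    (hasDerivAt_slice_θ (differentiableAt_of_contDiffOn hU h (le_add_self.trans hmn) hp)).deriv

lemma contDiffOn_cdφ (hU : IsOpen U) (h : ContDiffOn ℝ n ↿F U) (hmn : m + 1 ≤ n) :
    ContDiffOn ℝ m ↿(cdφ F) U :=
  (contDiffOn_fderiv_apply hU h hmn (0, 0, 1)).congr fun _ hp =>
    (hasDerivAt_slice_φ (differentiableAt_of_contDiffOn hU h (le_add_self.trans hmn) hp)).deriv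

end PartialDerivatives

/-- The part `∂_t² − ∂_t` of `cL`. -/
def cLt (F : ℝ → ℝ → ℝ → ℝ) : ℝ → ℝ → ℝ → ℝ := fun t θ φ =>
  cdt (cdt F) t θ φ - cdt F t θ φ

/-- The polar part `∂_θ² + cot θ ∂_θ` of `cL`. -/
def cLθ (F : ℝ → ℝ → ℝ → ℝ) : ℝ → ℝ → ℝ → ℝ := fun t θ φ =>
  cdθ (cdθ F) t θ φ + cos θ / sin θ * cdθ F t θ φ

/-- The azimuthal part `(sin θ)⁻² ∂_φ²` of `cL`. -/
def cLφ (F : ℝ → ℝ → ℝ → ℝ) : ℝ → ℝ → ℝ → ℝ := fun t θ φ =>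
  (sin θ ^ 2)⁻¹ * cdφ (cdφ F) t θ φ

section CylinderOperators

variable {F : ℝ → ℝ → ℝ → ℝ} {t θ φ : ℝ}

lemma cL_eq_add : cL F t θ φ = cLt F t θ φ + cLθ F t θ φ + cLφ F t θ φ :=
  (add_assoc _ _ _).symm

lemma cgradNormSq_nonneg : 0 ≤ cgradNormSq F t θ φ := by
  have polar_term : 0 ≤ (sin θ ^ 2)⁻¹ * pdφ (F t) θ φ ^ 2 := by positivity
  unfold cgradNormSq cgradDot gradDotS2
  linarith [mul_self_nonneg (cdt F t θ φ), mul_self_nonneg (pdθ (F t) θ φ)]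

lemma cgradNormSq_add_const (c : ℝ) :
    cgradNormSq (fun t θ φ => F t θ φ + c) t θ φ = cgradNormSq F t θ φ := by
  simp only [cgradNormSq, cgradDot, gradDotS2, cdt, pdθ, pdφ, deriv_add_const]

lemma cL_add_const (c : ℝ) : cL (fun t θ φ => F t θ φ + c) t θ φ = cL F t θ φ := by
  simp only [cL, lapS2, cdt, pdθ, pdφ, deriv_add_const]

lemma deriv_deriv_sq {g : ℝ → ℝ} {x : ℝ} (hg : ContDiffAt ℝ 2 g x) :
    deriv (deriv fun y => g y ^ 2) x = 2 * (deriv g x ^ 2 + g x * deriv (deriv g) x) := by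
  have deriv_sq : deriv (fun y => g y ^ 2) =ᶠ[nhds x] fun y => 2 * (g y * deriv g y) := by
    filter_upwards [hg.eventually (by simp)] with y hy
    rw [deriv_fun_pow (hy.differentiableAt two_ne_zero)]
    simp [mul_assoc]
  have dg := (hg.differentiableAt two_ne_zero).hasDerivAt
  have dg' : DifferentiableAt ℝ (deriv g) x :=
    ((hg.fderiv_right (m := 1) (by norm_num)).clm_apply contDiffAt_const).differentiableAt
      one_ne_zero
  rw [deriv_sq.deriv_eq]
  exact ((dg.mul dg'.hasDerivAt).const_mul 2).deriv.trans (by ring)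

lemma cL_sq (hF : ContDiffAt ℝ 2 ↿F (t, θ, φ)) :
    cL (fun t θ φ => F t θ φ ^ 2) t θ φ = 2 * (cgradNormSq F t θ φ + F t θ φ * cL F t θ φ) := by
  have slice_t : ContDiffAt ℝ 2 (fun s => F s θ φ) t :=
    hF.comp (f := fun s => (s, θ, φ)) t (by fun_prop)
  have slice_θ : ContDiffAt ℝ 2 (fun s => F t s φ) θ :=
    hF.comp (f := fun s => (t, s, φ)) θ (by fun_prop)
  have slice_φ : ContDiffAt ℝ 2 (fun s => F t θ s) φ :=
    hF.comp (f := fun s => (t, θ, s)) φ (by fun_prop)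
  have t_deriv := deriv_fun_pow (slice_t.differentiableAt two_ne_zero) 2
  have θ_deriv := deriv_fun_pow (slice_θ.differentiableAt two_ne_zero) 2
  simp only [cL, lapS2, cgradNormSq, cgradDot, gradDotS2, cdt, pdθ, pdφ, t_deriv, θ_deriv,
    deriv_deriv_sq slice_t, deriv_deriv_sq slice_θ, deriv_deriv_sq slice_φ]
  push_cast
  ring

lemma two_mul_cgradNormSq_add_le_cL_sq (hF : ContDiffAt ℝ 2 ↿F (t, θ, φ)) {e : ℝ} (he : 0 ≤ e)
    (heF : 2 * e ≤ cL F t θ φ) (hF_ge : 1 / 2 ≤ F t θ φ) :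
    2 * (cgradNormSq F t θ φ + e) ≤ cL (fun t θ φ => F t θ φ ^ 2) t θ φ := by
  have e_le : e ≤ F t θ φ * cL F t θ φ := by
    calc e ≤ 1 / 2 * cL F t θ φ := by linarith
      _ ≤ F t θ φ * cL F t θ φ := mul_le_mul_of_nonneg_right hF_ge (by linarith)
  rw [cL_sq hF]
  linarith

end CylinderOperators

/-- The part of the cylinder `I × S²` away from the poles, in the coordinates `(t, θ, φ)`. -/
def regularPart (I : Set ℝ) : Set (ℝ × ℝ × ℝ) := I ×ˢ Ioo 0 π ×ˢ univ

/-- The coordinate domain over which integrals on `J × S²` are taken; its complement in `J × S²`,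
the poles and the meridian `φ = 0`, is a null set. -/
def coordinateDomain (J : Set ℝ) : Set (ℝ × ℝ × ℝ) := J ×ˢ Ioo 0 π ×ˢ Ioo 0 (2 * π)

/-- The segment `[a, b] × S²` with the polar caps of radius `ε` removed, as a compact coordinate
box on which every coefficient of `cL` is continuous. -/
def truncatedCylinder (a b ε : ℝ) : Set (ℝ × ℝ × ℝ) :=
  Icc a b ×ˢ Icc ε (π - ε) ×ˢ Icc 0 (2 * π)

section RegularPart

variable {I : Set ℝ} {F : ℝ → ℝ → ℝ → ℝ} {a b ε : ℝ}

lemma isOpen_regularPart (hI : IsOpen I) : IsOpen (regularPart I) :=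
  hI.prod (isOpen_Ioo.prod isOpen_univ)

lemma regularPart_subset_closedStrip : regularPart I ⊆ I ×ˢ Icc 0 π ×ˢ univ :=
  prod_mono le_rfl (prod_mono Ioo_subset_Icc_self le_rfl)

lemma measurableSet_coordinateDomain {J : Set ℝ} (hJ : MeasurableSet J) :
    MeasurableSet (coordinateDomain J) :=
  hJ.prod (measurableSet_Ioo.prod measurableSet_Ioo)

lemma coordinateDomain_subset_regularPart {J : Set ℝ} (hJ : J ⊆ I) :
    coordinateDomain J ⊆ regularPart I :=
  prod_mono hJ (prod_mono le_rfl (subset_univ _))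

lemma isCompact_truncatedCylinder : IsCompact (truncatedCylinder a b ε) :=
  isCompact_Icc.prod (isCompact_Icc.prod isCompact_Icc)

lemma truncatedCylinder_subset_regularPart (hab : Icc a b ⊆ I) (hε : 0 < ε) :
    truncatedCylinder a b ε ⊆ regularPart I := fun _ ⟨ht, hθ, _⟩ =>
  ⟨hab ht, ⟨hε.trans_le hθ.1, hθ.2.trans_lt (by linarith)⟩, trivial⟩

lemma sin_pos_of_mem_regularPart {p : ℝ × ℝ × ℝ} (hp : p ∈ regularPart I) : 0 < sin p.2.1 :=
  sin_pos_of_mem_Ioo hp.2.1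

lemma continuousOn_inv_sin_sq :
    ContinuousOn (fun p : ℝ × ℝ × ℝ => (sin p.2.1 ^ 2)⁻¹) (regularPart I) :=
  ContinuousOn.inv₀ (by fun_prop) fun _ hp => (pow_pos (sin_pos_of_mem_regularPart hp) 2).ne'

lemma continuousOn_cgradNormSq (hI : IsOpen I) (hF : ContDiffOn ℝ 1 ↿F (regularPart I)) :
    ContinuousOn ↿(cgradNormSq F) (regularPart I) := by
  have hU := isOpen_regularPart hI
  have ct := (contDiffOn_cdt (m := 0) hU hF (by norm_num)).continuousOn
  have cθ := (contDiffOn_cdθ (m := 0) hU hF (by norm_num)).continuousOn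
  have cφ := (contDiffOn_cdφ (m := 0) hU hF (by norm_num)).continuousOn
  exact (ct.mul ct).add ((cθ.mul cθ).add ((continuousOn_inv_sin_sq.mul cφ).mul cφ))

lemma continuousOn_cLt (hI : IsOpen I) (hF : ContDiffOn ℝ 2 ↿F (regularPart I)) :
    ContinuousOn ↿(cLt F) (regularPart I) := by
  have hU := isOpen_regularPart hI
  have hFt := contDiffOn_cdt (m := 1) hU hF (by norm_num)
  exact (contDiffOn_cdt (m := 0) hU hFt (by norm_num)).continuousOn.sub hFt.continuousOn

lemma continuousOn_cLθ (hI : IsOpen I) (hF : ContDiffOn ℝ 2 ↿F (regularPart I)) :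
    ContinuousOn ↿(cLθ F) (regularPart I) := by
  have hU := isOpen_regularPart hI
  have hFθ := contDiffOn_cdθ (m := 1) hU hF (by norm_num)
  have ccot : ContinuousOn (fun p : ℝ × ℝ × ℝ => cos p.2.1 / sin p.2.1) (regularPart I) :=
    ContinuousOn.div (by fun_prop) (by fun_prop) fun _ hp => (sin_pos_of_mem_regularPart hp).ne'
  exact (contDiffOn_cdθ (m := 0) hU hFθ (by norm_num)).continuousOn.add
    (ccot.mul hFθ.continuousOn)

lemma continuousOn_cLφ (hI : IsOpen I) (hF : ContDiffOn ℝ 2 ↿F (regularPart I)) :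
    ContinuousOn ↿(cLφ F) (regularPart I) := by
  have hU := isOpen_regularPart hI
  have hFφ := contDiffOn_cdφ (m := 1) hU hF (by norm_num)
  exact continuousOn_inv_sin_sq.mul
    (contDiffOn_cdφ (m := 0) hU hFφ (by norm_num)).continuousOn

lemma continuousOn_cL (hI : IsOpen I) (hF : ContDiffOn ℝ 2 ↿F (regularPart I)) :
    ContinuousOn ↿(cL F) (regularPart I) :=
  (((continuousOn_cLt hI hF).add (continuousOn_cLθ hI hF)).add (continuousOn_cLφ hI hF)).congr
    fun _ _ => cL_eq_add

lemma exists_bound_cdθ (hI : IsOpen I) (hF : ContDiffOn ℝ 1 ↿F (I ×ˢ Icc 0 π ×ˢ univ))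
    {K : Set ℝ} (hK : IsCompact K) (hKI : K ⊆ I) (c d : ℝ) :
    ∃ M, ∀ t ∈ K, ∀ θ ∈ Ioo 0 π, ∀ φ ∈ Icc c d, |cdθ F t θ φ| ≤ M := by
  have unique_diff : UniqueDiffOn ℝ (I ×ˢ Icc 0 π ×ˢ (univ : Set ℝ)) :=
    hI.uniqueDiffOn.prod ((uniqueDiffOn_Icc pi_pos).prod uniqueDiffOn_univ)
  obtain ⟨M, hM⟩ := (hK.prod (isCompact_Icc.prod isCompact_Icc)).exists_bound_of_continuousOn
    ((hF.continuousOn_fderivWithin unique_diff le_rfl).mono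
      (prod_mono hKI (prod_mono le_rfl (subset_univ (Icc c d)))))
  refine ⟨M, fun t ht θ hθ φ hφ => ?_⟩
  have mem_nhds : I ×ˢ Icc 0 π ×ˢ univ ∈ nhds (t, θ, φ) :=
    mem_of_superset ((isOpen_regularPart hI).mem_nhds ⟨hKI ht, hθ, trivial⟩)
      regularPart_subset_closedStrip
  have fderiv_le : ‖fderiv ℝ ↿F (t, θ, φ)‖ ≤ M := by
    simpa only [fderivWithin_of_mem_nhds mem_nhds] using
      hM (t, θ, φ) ⟨ht, Ioo_subset_Icc_self hθ, hφ⟩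
  have hd : DifferentiableAt ℝ ↿F (t, θ, φ) :=
    (hF.contDiffAt mem_nhds).differentiableAt one_ne_zero
  calc |cdθ F t θ φ| = ‖fderiv ℝ ↿F (t, θ, φ) (0, 1, 0)‖ :=
        congrArg abs (hasDerivAt_slice_θ hd).deriv
    _ ≤ ‖fderiv ℝ ↿F (t, θ, φ)‖ * ‖((0, 1, 0) : ℝ × ℝ × ℝ)‖ :=
        ContinuousLinearMap.le_opNorm _ _
    _ ≤ M := by simpa [Prod.norm_def] using fderiv_le

lemma continuousOn_mul_mul_sin (hJ : Icc a b ⊆ I) (hε : 0 < ε) {ζ : ℝ → ℝ} (hζ : Continuous ζ)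
    (hF : ContinuousOn ↿F (regularPart I)) :
    ContinuousOn (fun p => ζ p.1 * F p.1 p.2.1 p.2.2 * sin p.2.1) (truncatedCylinder a b ε) :=
  ((hζ.comp continuous_fst).continuousOn.mul
    (hF.mono (truncatedCylinder_subset_regularPart hJ hε))).mul (by fun_prop)

end RegularPart

/-- The `t`-cutoffs tested against `cL` on `[a, b] × S²`: of class `C²` and vanishing to first order
at both ends, so that integrating by parts twice in `t` leaves no boundary term. -/
structure IsCutoff (ζ : ℝ → ℝ) (a b : ℝ) : Prop where
  contDiff : ContDiff ℝ 2 ζ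
  left : ζ a = 0
  right : ζ b = 0
  deriv_left : deriv ζ a = 0
  deriv_right : deriv ζ b = 0

/-- `f` is a subsolution of `cL f = 0` on `I × S²` with values in `[0, B]`, and `g` is a continuous
density with `0 ≤ g ≤ cL f`. Up to the poles `f` is `C²` in the coordinate sense only, which leaves
the coefficients of `cL` unbounded there. -/
structure IsSubsolution (I : Set ℝ) (B : ℝ) (f g : ℝ → ℝ → ℝ → ℝ) : Prop where
  contDiffOn : ContDiffOn ℝ 2 ↿f (I ×ˢ Icc 0 π ×ˢ univ)
  periodic : ∀ t θ, Function.Periodic (f t θ) (2 * π)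
  mem_Icc : ∀ t ∈ I, ∀ θ ∈ Ioo 0 π, ∀ φ, f t θ φ ∈ Icc 0 B
  continuousOn_density : ContinuousOn ↿g (regularPart I)
  density_nonneg : ∀ t ∈ I, ∀ θ ∈ Ioo 0 π, ∀ φ, 0 ≤ g t θ φ
  density_le : ∀ t ∈ I, ∀ θ ∈ Ioo 0 π, ∀ φ, g t θ φ ≤ cL f t θ φ

lemma IsSubsolution.bound_nonneg {I : Set ℝ} {B : ℝ} {f g : ℝ → ℝ → ℝ → ℝ}
    (hfg : IsSubsolution I B f g) (hI : I.Nonempty) : 0 ≤ B := by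
  obtain ⟨t, ht⟩ := hI
  have equator := hfg.mem_Icc t ht (π / 2) ⟨pi_div_two_pos, half_lt_self pi_pos⟩ 0
  exact equator.1.trans equator.2

section GreenIdentity

variable {I : Set ℝ} {f : ℝ → ℝ → ℝ → ℝ} {ζ : ℝ → ℝ} {a b ε : ℝ}

lemma setIntegral_mul_cLt (hI : IsOpen I) (hf : ContDiffOn ℝ 2 ↿f (regularPart I))
    (hab : a ≤ b) (hJ : Icc a b ⊆ I) (hε : 0 < ε) (hζ : IsCutoff ζ a b) :
    ∫ p in truncatedCylinder a b ε, ζ p.1 * cLt f p.1 p.2.1 p.2.2 * sin p.2.1 =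
      ∫ p in truncatedCylinder a b ε,
        (deriv (deriv ζ) p.1 + deriv ζ p.1) * f p.1 p.2.1 p.2.2 * sin p.2.1 := by
  have hU := isOpen_regularPart hI
  have hsub := truncatedCylinder_subset_regularPart hJ hε
  have hft := contDiffOn_cdt (m := 1) hU hf (by norm_num)
  have cftt := (contDiffOn_cdt (m := 0) hU hft (by norm_num)).continuousOn.mono hsub
  have hζ' : ContDiff ℝ 1 (deriv ζ) := hζ.contDiff.deriv'
  have cζ'' : Continuous (deriv (deriv ζ)) := hζ'.continuous_deriv le_rfl
  have clhs := continuousOn_mul_mul_sin hJ hε hζ.contDiff.continuous (continuousOn_cLt hI hf)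
  have crhs := continuousOn_mul_mul_sin hJ hε (cζ''.add hζ'.continuous) hf.continuousOn
  refine (setIntegral_box_fst hab clhs).trans (Eq.trans ?_ (setIntegral_box_fst hab crhs).symm)
  refine setIntegral_congr_fun (measurableSet_Icc.prod measurableSet_Icc) fun q hq => ?_
  have mem (t) (ht : t ∈ uIcc a b) : (t, q) ∈ truncatedCylinder a b ε :=
    ⟨by rwa [uIcc_of_le hab] at ht, hq⟩
  have cftt_slice : ContinuousOn (fun t => cdt (cdt f) t q.1 q.2) (uIcc a b) :=
    cftt.comp (f := fun t => (t, q)) (by fun_prop) mem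
  refine (intervalIntegral.integral_mul_const _ _).trans
    (Eq.trans (congrArg (· * sin q.1) ?_) (intervalIntegral.integral_mul_const _ _).symm)
  exact integral_mul_deriv2_sub_deriv
    (fun t _ => (hζ.contDiff.differentiable two_ne_zero t).hasDerivAt)
    (fun t _ => (hζ'.differentiable one_ne_zero t).hasDerivAt)
    (fun t ht => hasDerivAt_cdt (differentiableAt_of_contDiffOn hU hf one_le_two (hsub (mem t ht))))
    (fun t ht => hasDerivAt_cdt (differentiableAt_of_contDiffOn hU hft le_rfl (hsub (mem t ht))))
    cζ''.continuousOn cftt_slice hζ.left hζ.right hζ.deriv_left hζ.deriv_right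

lemma abs_setIntegral_mul_cLθ_le (hI : IsOpen I) (hf : ContDiffOn ℝ 2 ↿f (regularPart I))
    (hab : a ≤ b) (hJ : Icc a b ⊆ I) (hε : 0 < ε) (hε' : ε ≤ π / 2) (hζ : Continuous ζ) {K : ℝ}
    (hK : ∀ t ∈ Icc a b, ∀ θ ∈ Ioo 0 π, ∀ φ ∈ Icc 0 (2 * π), |ζ t * cdθ f t θ φ| ≤ K) :
    |∫ p in truncatedCylinder a b ε, ζ p.1 * cLθ f p.1 p.2.1 p.2.2 * sin p.2.1| ≤
      4 * π * (b - a) * (K * sin ε) := by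
  have hU := isOpen_regularPart hI
  have hsub := truncatedCylinder_subset_regularPart hJ hε
  have hfθ := contDiffOn_cdθ (m := 1) hU hf (by norm_num)
  have cfθθ := (contDiffOn_cdθ (m := 0) hU hfθ (by norm_num)).continuousOn.mono hsub
  have meridian (t) (ht : t ∈ Icc a b) (φ) (hφ : φ ∈ Icc 0 (2 * π)) :
      ‖∫ θ in ε..(π - ε), ζ t * cLθ f t θ φ * sin θ‖ ≤ 2 * (K * sin ε) := by
    have mem (θ) (hθ : θ ∈ Icc ε (π - ε)) : (t, θ, φ) ∈ truncatedCylinder a b ε := ⟨ht, hθ, hφ⟩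
    have cfθθ_slice : ContinuousOn (fun θ => cdθ (cdθ f) t θ φ) (Icc ε (π - ε)) :=
      cfθθ.comp (f := fun θ => (t, θ, φ)) (by fun_prop) mem
    simpa only [Real.norm_eq_abs, cLθ, mul_add, mul_left_comm] using
      abs_integral_deriv2_add_cot_mul_deriv_mul_sin_le hε hε'
        (fun θ hθ => (hasDerivAt_cdθ
          (differentiableAt_of_contDiffOn hU hfθ le_rfl (hsub (mem θ hθ)))).const_mul (ζ t))
        (cfθθ_slice.const_mul (ζ t)) fun θ hθ => hK t ht θ hθ φ hφ
  have circle (t) (ht : t ∈ Icc a b) := norm_setIntegral_le_of_norm_le_const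
    (measure_Icc_lt_top (μ := volume)) (meridian t ht)
  have total := norm_setIntegral_le_of_norm_le_const (measure_Icc_lt_top (μ := volume)) circle
  have fubini := setIntegral_box_snd (by linarith : ε ≤ π - ε)
    (continuousOn_mul_mul_sin hJ hε hζ (continuousOn_cLθ hI hf))
  rw [← Real.norm_eq_abs]
  refine (congrArg norm fubini).trans_le (total.trans_eq ?_)
  rw [Real.volume_real_Icc_of_le hab, Real.volume_real_Icc_of_le two_pi_pos.le]
  ring

lemma setIntegral_mul_cLφ (hI : IsOpen I) (hf : ContDiffOn ℝ 2 ↿f (regularPart I))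
    (per : ∀ t θ, Function.Periodic (f t θ) (2 * π)) (hJ : Icc a b ⊆ I) (hε : 0 < ε)
    (hζ : Continuous ζ) :
    ∫ p in truncatedCylinder a b ε, ζ p.1 * cLφ f p.1 p.2.1 p.2.2 * sin p.2.1 = 0 := by
  have hU := isOpen_regularPart hI
  have hsub := truncatedCylinder_subset_regularPart hJ hε
  have hfφ := contDiffOn_cdφ (m := 1) hU hf (by norm_num)
  have cfφφ := (contDiffOn_cdφ (m := 0) hU hfφ (by norm_num)).continuousOn.mono hsub
  have fubini := setIntegral_box_trd two_pi_pos.le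
    (continuousOn_mul_mul_sin hJ hε hζ (continuousOn_cLφ hI hf))
  refine fubini.trans <| setIntegral_eq_zero_of_forall_eq_zero fun t ht =>
    setIntegral_eq_zero_of_forall_eq_zero fun θ hθ => ?_
  have mem (φ) (hφ : φ ∈ uIcc 0 (2 * π)) : (t, θ, φ) ∈ truncatedCylinder a b ε :=
    ⟨ht, hθ, by rwa [uIcc_of_le two_pi_pos.le] at hφ⟩
  have cfφφ_slice : ContinuousOn (fun φ => cdφ (cdφ f) t θ φ) (uIcc 0 (2 * π)) :=
    cfφφ.comp (f := fun φ => (t, θ, φ)) (by fun_prop) mem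
  have loop : ∫ φ in 0..2 * π, cdφ (cdφ f) t θ φ = cdφ f t θ (2 * π) - cdφ f t θ 0 :=
    intervalIntegral.integral_eq_sub_of_hasDerivAt
      (fun φ hφ => hasDerivAt_cdφ (differentiableAt_of_contDiffOn hU hfφ le_rfl (hsub (mem φ hφ))))
      cfφφ_slice.intervalIntegrable
  have closed : cdφ f t θ (2 * π) = cdφ f t θ 0 := (periodic_deriv (per t θ)).eq
  simp only [cLφ, intervalIntegral.integral_mul_const, intervalIntegral.integral_const_mul, loop,
    closed, sub_self, mul_zero, zero_mul]

lemma abs_setIntegral_mul_cL_sub_le (hI : IsOpen I) (hf : ContDiffOn ℝ 2 ↿f (regularPart I))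
    (per : ∀ t θ, Function.Periodic (f t θ) (2 * π)) (hab : a ≤ b) (hJ : Icc a b ⊆ I)
    (hε : 0 < ε) (hε' : ε ≤ π / 2) (hζ : IsCutoff ζ a b) {K : ℝ}
    (hK : ∀ t ∈ Icc a b, ∀ θ ∈ Ioo 0 π, ∀ φ ∈ Icc 0 (2 * π), |ζ t * cdθ f t θ φ| ≤ K) :
    |(∫ p in truncatedCylinder a b ε, ζ p.1 * cL f p.1 p.2.1 p.2.2 * sin p.2.1) -
      ∫ p in truncatedCylinder a b ε,
        (deriv (deriv ζ) p.1 + deriv ζ p.1) * f p.1 p.2.1 p.2.2 * sin p.2.1|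
      ≤ 4 * π * (b - a) * (K * sin ε) := by
  have it := integrableOn_box
    (continuousOn_mul_mul_sin hJ hε hζ.contDiff.continuous (continuousOn_cLt hI hf))
  have iθ := integrableOn_box
    (continuousOn_mul_mul_sin hJ hε hζ.contDiff.continuous (continuousOn_cLθ hI hf))
  have iφ := integrableOn_box
    (continuousOn_mul_mul_sin hJ hε hζ.contDiff.continuous (continuousOn_cLφ hI hf))
  have split : ∫ p in truncatedCylinder a b ε, ζ p.1 * cL f p.1 p.2.1 p.2.2 * sin p.2.1 =
      (∫ p in truncatedCylinder a b ε, ζ p.1 * cLt f p.1 p.2.1 p.2.2 * sin p.2.1) +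
      (∫ p in truncatedCylinder a b ε, ζ p.1 * cLθ f p.1 p.2.1 p.2.2 * sin p.2.1) +
      ∫ p in truncatedCylinder a b ε, ζ p.1 * cLφ f p.1 p.2.1 p.2.2 * sin p.2.1 := by
    simp only [cL_eq_add, mul_add, add_mul]
    exact (integral_add (it.add iθ) iφ).trans (congrArg (· + _) (integral_add it iθ))
  rw [split, setIntegral_mul_cLt hI hf hab hJ hε hζ,
    setIntegral_mul_cLφ hI hf per hJ hε hζ.contDiff.continuous, add_zero, add_sub_cancel_left]
  exact abs_setIntegral_mul_cLθ_le hI hf hab hJ hε hε' hζ.contDiff.continuous hK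

lemma setIntegral_sin_truncatedCylinder (hab : a ≤ b) (hε : ε ≤ π / 2) :
    ∫ p in truncatedCylinder a b ε, sin p.2.1 = 4 * π * (b - a) * cos ε := by
  refine (setIntegral_box_snd (by linarith : ε ≤ π - ε) (by fun_prop)).trans ?_
  simp only [integral_sin, cos_pi_sub, setIntegral_const, Real.volume_real_Icc_of_le hab,
    Real.volume_real_Icc_of_le two_pi_pos.le, smul_eq_mul]
  ring

lemma setIntegral_mul_density_le (hI : IsOpen I) {g : ℝ → ℝ → ℝ → ℝ} {B : ℝ}
    (hfg : IsSubsolution I B f g) (hab : a ≤ b) (hJ : Icc a b ⊆ I) (hε : 0 < ε)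
    (hε' : ε ≤ π / 2) (hζ : IsCutoff ζ a b) (hζ_nonneg : ∀ t ∈ Icc a b, 0 ≤ ζ t)
    {Z : ℝ} (hZ : 0 ≤ Z) (hζZ : ∀ t ∈ Icc a b, deriv (deriv ζ) t + deriv ζ t ≤ Z) {K : ℝ}
    (hK : ∀ t ∈ Icc a b, ∀ θ ∈ Ioo 0 π, ∀ φ ∈ Icc 0 (2 * π), |ζ t * cdθ f t θ φ| ≤ K) :
    ∫ p in truncatedCylinder a b ε, ζ p.1 * g p.1 p.2.1 p.2.2 * sin p.2.1 ≤
      4 * π * (b - a) * (Z * B) + 4 * π * (b - a) * K * sin ε := by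
  have hsub := truncatedCylinder_subset_regularPart hJ hε
  have hf := hfg.contDiffOn.mono regularPart_subset_closedStrip
  have hB : 0 ≤ B := hfg.bound_nonneg ⟨a, hJ ⟨le_rfl, hab⟩⟩
  have hmeas := (isCompact_truncatedCylinder (a := a) (b := b) (ε := ε)).measurableSet
  have hζ' : ContDiff ℝ 1 (deriv ζ) := hζ.contDiff.deriv'
  have cζ := hζ.contDiff.continuous
  have cζ'' := (hζ'.continuous_deriv le_rfl).add hζ'.continuous
  have test : ∫ p in truncatedCylinder a b ε, ζ p.1 * g p.1 p.2.1 p.2.2 * sin p.2.1 ≤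
      ∫ p in truncatedCylinder a b ε, ζ p.1 * cL f p.1 p.2.1 p.2.2 * sin p.2.1 := by
    refine setIntegral_mono_on
      (integrableOn_box (continuousOn_mul_mul_sin hJ hε cζ hfg.continuousOn_density))
      (integrableOn_box (continuousOn_mul_mul_sin hJ hε cζ (continuousOn_cL hI hf)))
      hmeas fun p hp => mul_le_mul_of_nonneg_right ?_ (sin_pos_of_mem_regularPart (hsub hp)).le
    exact mul_le_mul_of_nonneg_left
      (hfg.density_le _ (hsub hp).1 _ (hsub hp).2.1 _) (hζ_nonneg _ hp.1)
  have mass : ∫ p in truncatedCylinder a b ε,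
        (deriv (deriv ζ) p.1 + deriv ζ p.1) * f p.1 p.2.1 p.2.2 * sin p.2.1 ≤
      4 * π * (b - a) * (Z * B) := by
    calc _ ≤ ∫ p in truncatedCylinder a b ε, Z * B * sin p.2.1 := by
          refine setIntegral_mono_on
            (integrableOn_box (continuousOn_mul_mul_sin hJ hε cζ'' hf.continuousOn))
            (integrableOn_box (by fun_prop)) hmeas
            fun p hp => mul_le_mul_of_nonneg_right ?_ (sin_pos_of_mem_regularPart (hsub hp)).le
          have hfp := hfg.mem_Icc _ (hsub hp).1 _ (hsub hp).2.1 p.2.2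
          exact mul_le_mul (hζZ _ hp.1) hfp.2 hfp.1 hZ
      _ = Z * B * (4 * π * (b - a) * cos ε) := by
          rw [integral_const_mul, setIntegral_sin_truncatedCylinder hab hε']
      _ ≤ Z * B * (4 * π * (b - a) * 1) := by
          have := sub_nonneg.2 hab
          gcongr
          exact cos_le_one ε
      _ = _ := by ring
  have green := (abs_le.1
    (abs_setIntegral_mul_cL_sub_le hI hf hfg.periodic hab hJ hε hε' hζ hK)).2
  linarith

end GreenIdentity

section MassBounds

lemma integrable_and_integral_le_of_exhaustion {α : Type*} [MeasurableSpace α] {μ : Measure α}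
    {s : ℕ → Set α} (hs : AECover μ atTop s) {G : α → ℝ} (hG : 0 ≤ᵐ[μ] G)
    (h_int : ∀ n, IntegrableOn G (s n) μ) {u : ℕ → ℝ} (hu : ∀ n, ∫ x in s n, G x ∂μ ≤ u n)
    {A : ℝ} (hA : Tendsto u atTop (nhds A)) : Integrable G μ ∧ ∫ x, G x ∂μ ≤ A := by
  obtain ⟨C, hC⟩ := hA.bddAbove_range
  have hfi : Integrable G μ := hs.integrable_of_integral_bounded_of_nonneg_ae C h_int hG
    (.of_forall fun n => (hu n).trans (hC ⟨n, rfl⟩))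
  exact ⟨hfi, le_of_tendsto_of_tendsto'
    (hs.integral_tendsto_of_countably_generated hfi) hA hu⟩

lemma integrableOn_and_setIntegral_le_of_mul_le {α : Type*} [MeasurableSpace α] {μ : Measure α}
    {s t : Set α} (hs : MeasurableSet s) (ht : MeasurableSet t) (hst : s ⊆ t) {h k : α → ℝ}
    {m A : ℝ} (hm : 0 < m) (hmeas : AEStronglyMeasurable h (μ.restrict s))
    (h_nonneg : ∀ x ∈ s, 0 ≤ h x) (hhk : ∀ x ∈ s, m * h x ≤ k x) (k_nonneg : ∀ x ∈ t, 0 ≤ k x)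
    (hk : IntegrableOn k t μ) (hkA : ∫ x in t, k x ∂μ ≤ A) :
    IntegrableOn h s μ ∧ ∫ x in s, h x ∂μ ≤ A / m := by
  have h_le (x) (hx : x ∈ s) : h x ≤ k x / m := (le_div_iff₀' hm).2 (hhk x hx)
  have k_div : IntegrableOn (fun x => k x / m) s μ := (hk.mono_set hst).div_const m
  have h_int : IntegrableOn h s μ := k_div.mono' hmeas <| by
    filter_upwards [ae_restrict_mem hs] with x hx
    exact (Real.norm_of_nonneg (h_nonneg x hx)).trans_le (h_le x hx)
  refine ⟨h_int, ?_⟩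
  calc ∫ x in s, h x ∂μ ≤ ∫ x in s, k x / m ∂μ := setIntegral_mono_on h_int k_div hs h_le
    _ = (∫ x in s, k x ∂μ) / m := integral_div m k
    _ ≤ A / m := div_le_div_of_nonneg_right ((setIntegral_mono_set hk
        (ae_restrict_of_forall_mem ht k_nonneg) hst.eventuallyLE).trans hkA) hm.le

lemma aecover_truncatedCylinder (a b : ℝ) :
    AECover (volume.restrict (coordinateDomain (Ioo a b))) atTop
      fun n : ℕ => truncatedCylinder a b (1 / (n + 1)) where
  measurableSet _ := isCompact_truncatedCylinder.measurableSet
  ae_eventually_mem := by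
    filter_upwards [ae_restrict_mem (measurableSet_coordinateDomain measurableSet_Ioo)]
      with p ⟨ht, hθ, hφ⟩
    have small := tendsto_one_div_add_atTop_nhds_zero_nat (𝕜 := ℝ)
    filter_upwards [small.eventually_le_const hθ.1,
      small.eventually_le_const (sub_pos.2 hθ.2)] with n hn hn'
    exact ⟨Ioo_subset_Icc_self ht, ⟨hn, by linarith⟩, Ioo_subset_Icc_self hφ⟩

lemma integrableOn_and_setIntegral_le_of_truncatedCylinder {a b A C : ℝ} {G : ℝ × ℝ × ℝ → ℝ}
    (hG : ∀ p ∈ regularPart (Icc a b), 0 ≤ G p)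
    (h_int : ∀ ε, 0 < ε → IntegrableOn G (truncatedCylinder a b ε))
    (hle : ∀ ε, 0 < ε → ε ≤ π / 2 → ∫ p in truncatedCylinder a b ε, G p ≤ A + C * sin ε) :
    IntegrableOn G (coordinateDomain (Ioo a b)) ∧
      ∫ p in coordinateDomain (Ioo a b), G p ≤ A := by
  have pos (n : ℕ) : 0 < 1 / (n + 1 : ℝ) := by positivity
  have le_pi_div_two (n : ℕ) : 1 / (n + 1 : ℝ) ≤ π / 2 :=
    (div_le_self zero_le_one (by linarith [n.cast_nonneg (α := ℝ)])).trans one_le_pi_div_two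
  have sin_tendsto : Tendsto (fun n : ℕ => sin (1 / (n + 1))) atTop (nhds 0) :=
    sin_zero ▸ (continuous_sin.tendsto 0).comp tendsto_one_div_add_atTop_nhds_zero_nat
  have bound_tendsto : Tendsto (fun n : ℕ => A + C * sin (1 / (n + 1))) atTop (nhds A) := by
    simpa using (sin_tendsto.const_mul C).const_add A
  refine integrable_and_integral_le_of_exhaustion (aecover_truncatedCylinder a b) ?_
    (fun n => (h_int _ (pos n)).mono_measure Measure.restrict_le_self) (fun n => ?_) bound_tendsto
  · filter_upwards [ae_restrict_mem (measurableSet_coordinateDomain measurableSet_Ioo)] with p hp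
    exact hG p (coordinateDomain_subset_regularPart Ioo_subset_Icc_self hp)
  · refine (integral_mono_measure (Measure.restrict_mono le_rfl Measure.restrict_le_self) ?_
      (h_int _ (pos n))).trans (hle _ (pos n) (le_pi_div_two n))
    filter_upwards [ae_restrict_mem isCompact_truncatedCylinder.measurableSet] with p hp
    exact hG p (truncatedCylinder_subset_regularPart le_rfl (pos n) hp)

end MassBounds

section Cutoff

variable {r R t : ℝ}

/-- The cutoff `(r² − t²)²` of the segment `[-r, r]`. -/
def quarticCutoff (r t : ℝ) : ℝ := (r ^ 2 - t ^ 2) ^ 2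

lemma deriv_quarticCutoff (r : ℝ) :
    deriv (quarticCutoff r) = fun t => -4 * t * (r ^ 2 - t ^ 2) := by
  ext t
  refine HasDerivAt.deriv ((((hasDerivAt_pow 2 t).const_sub (r ^ 2)).pow 2).congr_deriv ?_)
  norm_num
  ring

lemma deriv_deriv_quarticCutoff (r t : ℝ) :
    deriv (deriv (quarticCutoff r)) t = 12 * t ^ 2 - 4 * r ^ 2 := by
  rw [deriv_quarticCutoff]
  refine HasDerivAt.deriv ((((hasDerivAt_id t).const_mul (-4)).mul
    ((hasDerivAt_pow 2 t).const_sub (r ^ 2))).congr_deriv ?_)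
  norm_num
  ring

lemma isCutoff_quarticCutoff (r : ℝ) : IsCutoff (quarticCutoff r) (-r) r where
  contDiff := by unfold quarticCutoff; fun_prop
  left := by simp [quarticCutoff]
  right := by simp [quarticCutoff]
  deriv_left := by simp [deriv_quarticCutoff]
  deriv_right := by simp [deriv_quarticCutoff]

lemma deriv_deriv_add_deriv_quarticCutoff_le (ht : t ∈ Icc (-r) r) :
    deriv (deriv (quarticCutoff r)) t + deriv (quarticCutoff r) t ≤ 4 * r ^ 2 * (r + 2) := by
  have t_sq_le : t ^ 2 ≤ r ^ 2 := sq_le_sq' ht.1 ht.2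
  have first_order : -t * (r ^ 2 - t ^ 2) ≤ r * r ^ 2 :=
    mul_le_mul (by linarith [ht.1]) (by linarith [sq_nonneg t]) (by linarith)
      (by linarith [ht.1, ht.2])
  rw [deriv_deriv_quarticCutoff, deriv_quarticCutoff]
  linarith

lemma sq_sub_sq_sq_le_quarticCutoff (hRr : R ≤ r) (ht : t ∈ Ioo (-R) R) :
    (r ^ 2 - R ^ 2) ^ 2 ≤ quarticCutoff r t := by
  have hR : 0 ≤ R := by linarith [ht.1, ht.2]
  have t_sq_le : t ^ 2 ≤ R ^ 2 := sq_le_sq' ht.1.le ht.2.le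
  have R_sq_le : R ^ 2 ≤ r ^ 2 := by gcongr
  unfold quarticCutoff
  gcongr

end Cutoff

section InteriorEstimate

variable {I : Set ℝ} {f g : ℝ → ℝ → ℝ → ℝ} {a b r R T B : ℝ}

lemma integrableOn_and_setIntegral_mul_density_le (hI : IsOpen I) (hfg : IsSubsolution I B f g)
    (hab : a ≤ b) (hJ : Icc a b ⊆ I) {ζ : ℝ → ℝ} (hζ : IsCutoff ζ a b)
    (hζ_nonneg : ∀ t ∈ Icc a b, 0 ≤ ζ t) {Z : ℝ} (hZ : 0 ≤ Z)
    (hζZ : ∀ t ∈ Icc a b, deriv (deriv ζ) t + deriv ζ t ≤ Z) :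
    IntegrableOn (fun p => ζ p.1 * g p.1 p.2.1 p.2.2 * sin p.2.1) (coordinateDomain (Ioo a b)) ∧
      ∫ p in coordinateDomain (Ioo a b), ζ p.1 * g p.1 p.2.1 p.2.2 * sin p.2.1 ≤
        4 * π * (b - a) * (Z * B) := by
  obtain ⟨M, hM⟩ := exists_bound_cdθ hI (hfg.contDiffOn.of_le one_le_two) isCompact_Icc hJ 0 (2 * π)
  obtain ⟨C, hC⟩ := isCompact_Icc.exists_bound_of_continuousOn
    (hζ.contDiff.continuous.continuousOn (s := Icc a b))
  have hK : ∀ t ∈ Icc a b, ∀ θ ∈ Ioo 0 π, ∀ φ ∈ Icc 0 (2 * π), |ζ t * cdθ f t θ φ| ≤ C * M :=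
    fun t ht θ hθ φ hφ => (abs_mul _ _).trans_le <|
      mul_le_mul (hC t ht) (hM t ht θ hθ φ hφ) (abs_nonneg _) ((norm_nonneg _).trans (hC t ht))
  exact integrableOn_and_setIntegral_le_of_truncatedCylinder
    (fun p hp => mul_nonneg
      (mul_nonneg (hζ_nonneg _ hp.1) (hfg.density_nonneg _ (hJ hp.1) _ hp.2.1 _))
      (sin_pos_of_mem_regularPart hp).le)
    (fun ε hε => integrableOn_box (continuousOn_mul_mul_sin hJ hε hζ.contDiff.continuous
      hfg.continuousOn_density))
    fun ε hε hε' => setIntegral_mul_density_le hI hfg hab hJ hε hε' hζ hζ_nonneg hZ hζZ hK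

lemma integrableOn_and_setIntegral_density_le (hI : IsOpen I) (hfg : IsSubsolution I B f g)
    (hR : 0 ≤ R) (hRr : R < r) (hJ : Icc (-r) r ⊆ I) :
    IntegrableOn (fun p => g p.1 p.2.1 p.2.2 * sin p.2.1) (coordinateDomain (Ioo (-R) R)) ∧
      ∫ p in coordinateDomain (Ioo (-R) R), g p.1 p.2.1 p.2.2 * sin p.2.1 ≤
        32 * π * r ^ 3 * (r + 2) * B / (r ^ 2 - R ^ 2) ^ 2 := by
  have hr : 0 < r := hR.trans_lt hRr
  obtain ⟨h_int, hle⟩ := integrableOn_and_setIntegral_mul_density_le hI hfg (neg_le_self hr.le) hJ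
    (isCutoff_quarticCutoff r) (fun t _ => sq_nonneg _) (Z := 4 * r ^ 2 * (r + 2)) (by positivity)
    fun t => deriv_deriv_add_deriv_quarticCutoff_le
  have m_pos : 0 < (r ^ 2 - R ^ 2) ^ 2 := pow_pos (sub_pos.2 (by gcongr)) 2
  have V_meas (ρ : ℝ) : MeasurableSet (coordinateDomain (Ioo (-ρ) ρ)) :=
    measurableSet_coordinateDomain measurableSet_Ioo
  have V_subset : coordinateDomain (Ioo (-R) R) ⊆ coordinateDomain (Ioo (-r) r) :=
    prod_mono (Ioo_subset_Ioo (by linarith) hRr.le) le_rfl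
  have V_regular : coordinateDomain (Ioo (-r) r) ⊆ regularPart I :=
    coordinateDomain_subset_regularPart (Ioo_subset_Icc_self.trans hJ)
  have nonneg (p) (hp : p ∈ regularPart I) : 0 ≤ g p.1 p.2.1 p.2.2 * sin p.2.1 :=
    mul_nonneg (hfg.density_nonneg _ hp.1 _ hp.2.1 _) (sin_pos_of_mem_regularPart hp).le
  have cG : ContinuousOn (fun p => g p.1 p.2.1 p.2.2 * sin p.2.1) (regularPart I) :=
    hfg.continuousOn_density.mul (by fun_prop)
  obtain ⟨h_int', hle'⟩ := integrableOn_and_setIntegral_le_of_mul_le (V_meas R) (V_meas r) V_subset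
    m_pos ((cG.mono (V_subset.trans V_regular)).aestronglyMeasurable (V_meas R))
    (fun p hp => nonneg p (V_regular (V_subset hp)))
    (fun p hp => (mul_le_mul_of_nonneg_right (sq_sub_sq_sq_le_quarticCutoff hRr.le hp.1)
      (nonneg p (V_regular (V_subset hp)))).trans_eq (mul_assoc _ _ _).symm)
    (fun p hp => (mul_nonneg (sq_nonneg _) (nonneg p (V_regular hp))).trans_eq
      (mul_assoc _ _ _).symm) h_int hle
  exact ⟨h_int', hle'.trans_eq (by ring)⟩

lemma integrableOn_and_setIntegral_density_le_of_Ioo (hfg : IsSubsolution (Ioo (-T) T) B f g)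
    (hR : 0 ≤ R) (hRT : R < T) :
    IntegrableOn (fun p => g p.1 p.2.1 p.2.2 * sin p.2.1) (coordinateDomain (Ioo (-R) R)) ∧
      ∫ p in coordinateDomain (Ioo (-R) R), g p.1 p.2.1 p.2.2 * sin p.2.1 ≤
        32 * π * T * (T + 2) * B / (T - R) ^ 2 := by
  have mass_le (r) (hr : r ∈ Ioo R T) := integrableOn_and_setIntegral_density_le isOpen_Ioo hfg
    hR hr.1 (Icc_subset_Ioo (neg_lt_neg hr.2) hr.2)
  have hT : 0 < T := hR.trans_lt hRT
  have gap : 0 < T ^ 2 - R ^ 2 := sub_pos.2 (by gcongr)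
  have bound_tendsto : Tendsto (fun r => 32 * π * r ^ 3 * (r + 2) * B / (r ^ 2 - R ^ 2) ^ 2)
      (nhdsWithin T (Iio T)) (nhds (32 * π * T ^ 3 * (T + 2) * B / (T ^ 2 - R ^ 2) ^ 2)) :=
    (ContinuousAt.div (by fun_prop) (by fun_prop) (by positivity)).tendsto.mono_left
      nhdsWithin_le_nhds
  have bound_at : ∀ᶠ r in nhdsWithin T (Iio T),
      ∫ p in coordinateDomain (Ioo (-R) R), g p.1 p.2.1 p.2.2 * sin p.2.1 ≤
        32 * π * r ^ 3 * (r + 2) * B / (r ^ 2 - R ^ 2) ^ 2 := by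
    filter_upwards [Ioo_mem_nhdsLT hRT] with r hr using (mass_le r hr).2
  obtain ⟨r, hr⟩ := exists_between hRT
  refine ⟨(mass_le r hr).1, ?_⟩
  calc _ ≤ 32 * π * T ^ 3 * (T + 2) * B / (T ^ 2 - R ^ 2) ^ 2 :=
        ge_of_tendsto bound_tendsto bound_at
    _ ≤ 32 * π * T ^ 3 * (T + 2) * B / ((T - R) * T) ^ 2 := by
        have hB : 0 ≤ B := hfg.bound_nonneg ⟨0, neg_lt_zero.2 hT, hT⟩
        have := mul_pos (sub_pos.2 hRT) hT
        gcongr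
        nlinarith
    _ = 32 * π * T * (T + 2) * B / (T - R) ^ 2 := by
        have := (sub_pos.2 hRT).ne'
        field_simp

lemma setIntegral_sphInt {J : Set ℝ}
    (hf : IntegrableOn (fun p => f p.1 p.2.1 p.2.2 * sin p.2.1) (coordinateDomain J)) :
    ∫ t in J, sphInt (f t) = ∫ p in coordinateDomain J, f p.1 p.2.1 p.2.2 * sin p.2.1 := by
  have slice_integrable : ∀ᵐ t ∂volume.restrict J,
      IntegrableOn (fun q : ℝ × ℝ => f t q.1 q.2 * sin q.1) (Ioo 0 π ×ˢ Ioo 0 (2 * π)) := by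
    rw [IntegrableOn, coordinateDomain, Measure.volume_eq_prod, ← Measure.prod_restrict] at hf
    exact hf.prod_right_ae
  refine Eq.trans (integral_congr_ae ?_) (setIntegral_prod _ hf).symm
  filter_upwards [slice_integrable] with t ht
  refine Eq.trans ?_ (setIntegral_prod _ ht).symm
  simp only [sphInt, integral_mul_const]

end InteriorEstimate

namespace RHMSolution

variable {I : Set ℝ} {A₁ Λ a : ℝ} {Rω : Renormalizer I A₁}

lemma continuousOn_exp_mul_cgradNormSq (hI : IsOpen I) (S : RHMSolution I A₁ Rω Λ a) :
    ContinuousOn ↿(fun t θ φ =>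
      exp (4 * (S.Φ t θ φ - log (Rω.ω t θ φ))) * cgradNormSq S.v t θ φ) (regularPart I) := by
  have cΦ : ContinuousOn ↿S.Φ (regularPart I) :=
    S.regΦ.continuousOn.mono regularPart_subset_closedStrip
  have clog : ContinuousOn (fun p : ℝ × ℝ × ℝ => log (Rω.ω p.1 p.2.1 p.2.2)) (regularPart I) :=
    Rω.smooth.continuousOn.log fun p hp => (Rω.pos _ hp.1 _ hp.2.1 _).ne'
  have hv : ContDiffOn ℝ 1 ↿S.v (regularPart I) :=
    (S.regv.mono regularPart_subset_closedStrip).of_le (by norm_num)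
  exact (continuous_exp.comp_continuousOn ((cΦ.sub clog).const_mul 4)).mul
    (continuousOn_cgradNormSq hI hv)

end RHMSolution

lemma energy_constant_le {Λ : ℝ} (hΛ : 1 ≤ Λ) :
    4 * π * 2 * (2 + 2) * (4 * Λ + 1) ^ 2 ≤ 5000 * Λ ^ 2 := by
  calc 4 * π * 2 * (2 + 2) * (4 * Λ + 1) ^ 2 ≤ 4 * 4 * 2 * (2 + 2) * (5 * Λ) ^ 2 := by
        gcongr
        · exact pi_le_four
        · linarith
    _ ≤ 5000 * Λ ^ 2 := by nlinarith [sq_nonneg Λ]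

theorem statement_7_general {T R Λ : ℝ} {Φ e : ℝ → ℝ → ℝ → ℝ}
    (hΦ : ContDiffOn ℝ 2 ↿Φ (Ioo (-T) T ×ˢ Icc 0 π ×ˢ univ))
    (per : ∀ t θ, Function.Periodic (Φ t θ) (2 * π))
    (hΛ : ∀ t ∈ Ioo (-T) T, ∀ θ ∈ Ioo 0 π, ∀ φ, |Φ t θ φ| ≤ Λ)
    (he : ContinuousOn ↿e (regularPart (Ioo (-T) T)))
    (he_nonneg : ∀ t ∈ Ioo (-T) T, ∀ θ ∈ Ioo 0 π, ∀ φ, 0 ≤ e t θ φ)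
    (heΦ : ∀ t ∈ Ioo (-T) T, ∀ θ ∈ Ioo 0 π, ∀ φ, 2 * e t θ φ ≤ cL Φ t θ φ)
    (hR : 0 ≤ R) (hRT : R < T) :
    IntegrableOn
        (fun p => (cgradNormSq Φ p.1 p.2.1 p.2.2 + e p.1 p.2.1 p.2.2) * sin p.2.1)
        (coordinateDomain (Ioo (-R) R)) ∧
      ∫ t in Ioo (-R) R, sphInt (fun θ φ => cgradNormSq Φ t θ φ + e t θ φ) ≤
        4 * π * T * (T + 2) * (4 * Λ + 1) ^ 2 / (T - R) ^ 2 := by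
  have hΦ' := hΦ.mono regularPart_subset_closedStrip
  have hΛ' := fun t ht θ hθ φ => abs_le.1 (hΛ t ht θ hθ φ)
  have subsolution : IsSubsolution (Ioo (-T) T) ((2 * Λ + 1 / 2) ^ 2)
      (fun t θ φ => (Φ t θ φ + (Λ + 1 / 2)) ^ 2)
      (fun t θ φ => 2 * (cgradNormSq Φ t θ φ + e t θ φ)) :=
    { contDiffOn := (hΦ.add contDiffOn_const).pow 2
      periodic := fun t θ φ => by simp only [(per t θ) φ]
      mem_Icc := fun t ht θ hθ φ => ⟨sq_nonneg _,
        pow_le_pow_left₀ (by linarith [hΛ' t ht θ hθ φ]) (by linarith [hΛ' t ht θ hθ φ]) 2⟩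
      continuousOn_density :=
        ((continuousOn_cgradNormSq isOpen_Ioo (hΦ'.of_le one_le_two)).add he).const_mul 2
      density_nonneg := fun t ht θ hθ φ =>
        mul_nonneg zero_le_two (add_nonneg cgradNormSq_nonneg (he_nonneg t ht θ hθ φ))
      density_le := fun t ht θ hθ φ => by
        have hΦ_at : ContDiffAt ℝ 2 ↿Φ (t, θ, φ) :=
          hΦ'.contDiffAt ((isOpen_regularPart isOpen_Ioo).mem_nhds ⟨ht, hθ, mem_univ φ⟩)
        rw [← cgradNormSq_add_const (Λ + 1 / 2)]
        exact two_mul_cgradNormSq_add_le_cL_sq (hΦ_at.add contDiffAt_const)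
          (he_nonneg t ht θ hθ φ) (by simpa only [cL_add_const] using heΦ t ht θ hθ φ)
          (by linarith [hΛ' t ht θ hθ φ]) }
  obtain ⟨h_int, hle⟩ := integrableOn_and_setIntegral_density_le_of_Ioo subsolution hR hRT
  have h_int' : IntegrableOn
      (fun p => (cgradNormSq Φ p.1 p.2.1 p.2.2 + e p.1 p.2.1 p.2.2) * sin p.2.1)
      (coordinateDomain (Ioo (-R) R)) :=
    (h_int.const_mul (1 / 2)).congr (.of_forall fun p => by ring)
  refine ⟨h_int', ?_⟩
  rw [setIntegral_sphInt h_int']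
  simp only [mul_assoc (2 : ℝ), integral_const_mul] at hle
  calc _ ≤ 32 * π * T * (T + 2) * (2 * Λ + 1 / 2) ^ 2 / (T - R) ^ 2 / 2 := by linarith
    _ = _ := by ring

/-- Lemma `lem:local-bound`: interior energy estimate on the
cylinder for solutions of the renormalized harmonic map system with `L ln ω = 0`. -/
theorem statement_7
    (A₁ Λ a : ℝ) (Rω : Renormalizer (Ioo (-2) 2) A₁)
    (S : RHMSolution (Ioo (-2) 2) A₁ Rω Λ a)
    (hLω : ∀ t ∈ Ioo (-2 : ℝ) 2, ∀ θ ∈ Ioo (0 : ℝ) π, ∀ φ : ℝ,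
      cL (fun t θ φ => Real.log (Rω.ω t θ φ)) t θ φ = 0) :
    ∀ R : ℝ, 0 < R → R < 2 →
      (∫ t in Ioo (-R) R, sphInt (fun θ φ =>
          cgradNormSq S.Φ t θ φ
            + Real.exp (4 * (S.Φ t θ φ - Real.log (Rω.ω t θ φ)))
              * cgradNormSq S.v t θ φ))
        ≤ 5000 * Λ ^ 2 / (2 - R) ^ 2 := by
  intro R hR hR2
  exact (statement_7_general (S.regΦ.of_le (by norm_num)) S.periodicΦ
    (fun t ht θ hθ => S.bddΦ t ht θ (Ioo_subset_Icc_self hθ))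
    (S.continuousOn_exp_mul_cgradNormSq isOpen_Ioo)
    (fun _ _ _ _ _ => mul_nonneg (exp_pos _).le cgradNormSq_nonneg)
    (fun t ht θ hθ φ => by rw [S.eqΦ t ht θ hθ φ, hLω t ht θ hθ φ, add_zero, mul_assoc])
    hR.le hR2).2.trans (div_le_div_of_nonneg_right (energy_constant_le S.Λ_ge) (sq_nonneg _))
end
end
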